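/- Let 0 < r1 ≤ r2, let n be an integer with 2 ≤ n ≤ 5, and let Ω be an isoperimetric region in S^1_{r1} × S^1_{r2} × R^n. If θ_m = 0 or σ_m = 0, then I_{S^1_{r1}×R^{n+1}}(V^{n+2}(Ω)) ≤ V^{n+1}(∂Ω). -/

import Mathlib

open MeasureTheory Real ENNReal NNReal

noncomputable section

/-- The flat circle of radius `r` (circumference `2πr`), i.e. `ℝ / (2πr)ℤ`
with the quotient (arc-length) metric. -/
abbrev Circ (r : ℝ) : Type := AddCircle (2 * Real.pi * r)

/-- `d`-dimensional Hausdorff (Riemannian) measure of a subset of a metric space. -/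
noncomputable def haus (X : Type*) [EMetricSpace X] (d : ℕ) (s : Set X) : ℝ≥0∞ :=
  letI : MeasurableSpace X := borel X
  haveI : BorelSpace X := ⟨rfl⟩
  (MeasureTheory.Measure.hausdorffMeasure (d : ℝ) : Measure X) s

/-- A closed region is the closure of an open set. -/
def IsClosedRegion {X : Type*} [TopologicalSpace X] (U : Set X) : Prop :=
  ∃ V : Set X, IsOpen V ∧ U = closure V

/-- The isoperimetric profile of an `m`-dimensional space `X`:
the infimum of the `(m-1)`-dimensional boundary measures of closed regions
of `m`-dimensional measure `v`. -/
noncomputable def isoProfile (X : Type*) [EMetricSpace X] (m : ℕ) (v : ℝ≥0∞) : ℝ≥0∞ :=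
  ⨅ (U : Set X) (_ : IsClosedRegion U ∧ haus X m U = v), haus X (m - 1) (frontier U)

/-- An isoperimetric region in the `m`-dimensional space `X`. -/
def IsIsoRegion (X : Type*) [EMetricSpace X] (m : ℕ) (Ω : Set X) : Prop :=
  IsClosedRegion Ω ∧ haus X (m - 1) (frontier Ω) = isoProfile X m (haus X m Ω)

/-- Euclidean `n`-space. -/
abbrev EucSp (n : ℕ) : Type := EuclideanSpace ℝ (Fin n)

/-- The Riemannian product `S¹_r × ℝ^m` (with the `ℓ²` product metric). -/
abbrev S1R (r : ℝ) (m : ℕ) : Type := WithLp 2 (Circ r × EucSp m)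

/-- The Riemannian product `S¹_{r1} × S¹_{r2} × ℝ^n = T² × ℝ^n`. -/
abbrev T2R (r1 r2 : ℝ) (n : ℕ) : Type := WithLp 2 (Circ r1 × S1R r2 n)

/-- first circle coordinate of a point of `T² × ℝ^n` -/
def t2fst {r1 r2 : ℝ} {n : ℕ} (p : T2R r1 r2 n) : Circ r1 :=
  (WithLp.equiv 2 (Circ r1 × S1R r2 n) p).1

/-- second circle coordinate of a point of `T² × ℝ^n` -/
def t2snd {r1 r2 : ℝ} {n : ℕ} (p : T2R r1 r2 n) : Circ r2 :=
  (WithLp.equiv 2 (Circ r2 × EucSp n) ((WithLp.equiv 2 (Circ r1 × S1R r2 n) p).2)).1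

/-- Euclidean coordinate of a point of `T² × ℝ^n` -/
def t2euc {r1 r2 : ℝ} {n : ℕ} (p : T2R r1 r2 n) : EucSp n :=
  (WithLp.equiv 2 (Circ r2 × EucSp n) ((WithLp.equiv 2 (Circ r1 × S1R r2 n) p).2)).2

/-- `ω_n`, the `n`-dimensional volume of the unit round sphere `Sⁿ ⊂ ℝ^{n+1}`. -/
noncomputable def omegaS (n : ℕ) : ℝ :=
  (haus (EucSp (n+1)) n (Metric.sphere (0 : EucSp (n+1)) 1)).toReal

/-- `β_n(r) = n^{(n-1)(n+1)} (2πr ω_{n-1})^{n+1} (1+n)^{-n²} ω_n^{-n}`. -/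
noncomputable def betaC (n : ℕ) (r : ℝ) : ℝ :=
  (n : ℝ) ^ ((n-1)*(n+1)) * (2 * Real.pi * r * omegaS (n-1)) ^ (n+1) *
    ((1 + (n : ℝ)) ^ (n^2))⁻¹ * ((omegaS n) ^ n)⁻¹

/-- The isoperimetric profile of `ℝ^m`: `I_{ℝ^m}(v) = m^{(m-1)/m} ω_{m-1}^{1/m} v^{(m-1)/m}`. -/
noncomputable def eucProfile (m : ℕ) (v : ℝ) : ℝ :=
  (m : ℝ) ^ (((m : ℝ) - 1)/m) * omegaS (m-1) ^ ((1 : ℝ)/m) * v ^ (((m : ℝ) - 1)/m)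

/-- The region `S¹_{r1} × S¹_{r2} × B^n_R` in `T² × ℝ^n`. -/
def tball (r1 r2 : ℝ) (n : ℕ) (R : ℝ) : Set (T2R r1 r2 n) :=
  {p | ‖t2euc p‖ ≤ R}

/-- `f_n(v) = V^{n+1}(∂(S¹_{r1} × S¹_{r2} × B^n_R))`, where `R > 0` is such that
`V^{n+2}(S¹_{r1} × S¹_{r2} × B^n_R) = v`. -/
noncomputable def fA (r1 r2 : ℝ) (n : ℕ) (v : ℝ≥0∞) : ℝ≥0∞ :=
  ⨅ (R : ℝ) (_ : 0 < R ∧ haus (T2R r1 r2 n) (n+2) (tball r1 r2 n R) = v),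
    haus (T2R r1 r2 n) (n+1) (frontier (tball r1 r2 n R))

/-- The slice function `F₁(t) = V^{n+1}(Ω ∩ ({t} × S¹_{r2} × ℝ^n))`. -/
noncomputable def sliceF1 {r1 r2 : ℝ} {n : ℕ} (Ω : Set (T2R r1 r2 n)) (t : Circ r1) : ℝ≥0∞ :=
  haus (T2R r1 r2 n) (n+1) (Ω ∩ {p | t2fst p = t})

/-- The slice function `F₂(s) = V^{n+1}(Ω ∩ (S¹_{r1} × {s} × ℝ^n))`. -/
noncomputable def sliceF2 {r1 r2 : ℝ} {n : ℕ} (Ω : Set (T2R r1 r2 n)) (s : Circ r2) : ℝ≥0∞ :=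
  haus (T2R r1 r2 n) (n+1) (Ω ∩ {p | t2snd p = s})

/-- `θ_m`, the minimum (infimum) of the slice function `F₁`. -/
noncomputable def thetaMin {r1 r2 : ℝ} {n : ℕ} (Ω : Set (T2R r1 r2 n)) : ℝ≥0∞ :=
  ⨅ t : Circ r1, sliceF1 Ω t

/-- `θ_M`, the maximum (supremum) of the slice function `F₁`. -/
noncomputable def thetaMax {r1 r2 : ℝ} {n : ℕ} (Ω : Set (T2R r1 r2 n)) : ℝ≥0∞ :=
  ⨆ t : Circ r1, sliceF1 Ω t

/-- `σ_m`, the minimum (infimum) of the slice function `F₂`. -/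
noncomputable def sigmaMin {r1 r2 : ℝ} {n : ℕ} (Ω : Set (T2R r1 r2 n)) : ℝ≥0∞ :=
  ⨅ s : Circ r2, sliceF2 Ω s

/-- `σ_M`, the maximum (supremum) of the slice function `F₂`. -/
noncomputable def sigmaMax {r1 r2 : ℝ} {n : ℕ} (Ω : Set (T2R r1 r2 n)) : ℝ≥0∞ :=
  ⨆ s : Circ r2, sliceF2 Ω s

/-- The region `S¹_r × B^m_R` in `S¹_r × ℝ^m`. -/
def s1ball (r : ℝ) (m : ℕ) (R : ℝ) : Set (S1R r m) :=
  {p | ‖(WithLp.equiv 2 (Circ r × EucSp m) p).2‖ ≤ R}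

theorem haus_eq_hausdorffMeasure {X : Type*} [EMetricSpace X] [MeasurableSpace X] [b : BorelSpace X]
    (d : ℕ) (s : Set X) : haus X d s = (Measure.hausdorffMeasure (d : ℝ) : Measure X) s := by
  obtain rfl := b.measurable_eq
  rfl

/-- The perimeter of an arbitrary set bounds the isoperimetric profile at its volume. -/
theorem isoProfile_le_frontier {X : Type*} [EMetricSpace X] (m : ℕ) (A : Set X) :
    isoProfile X (m + 1) (haus X (m + 1) A) ≤ haus X m (frontier A) := by
  borelize X
  by_cases htop : haus X m (frontier A) = ⊤
  · rw [htop]; exact le_top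
  have hnull : (Measure.hausdorffMeasure ((m + 1 : ℕ) : ℝ) : Measure X) (frontier A) = 0 := by
    rcases Measure.hausdorffMeasure_zero_or_top (X := X) (d₁ := (m : ℝ)) (d₂ := ((m + 1 : ℕ) : ℝ))
      (by push_cast; linarith) (frontier A) with h | h
    · exact h
    · exact absurd (haus_eq_hausdorffMeasure m (frontier A) ▸ h) htop
  have hcl : closure (interior A) ⊆ closure A := closure_mono interior_subset
  have hfr : frontier (closure (interior A)) ⊆ frontier A := by
    intro x hx
    refine ⟨hcl (by simpa using hx.1), fun hxi => hx.2 ?_⟩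
    exact interior_mono subset_closure (by simpa using hxi)
  have hvol : haus X (m + 1) (closure (interior A)) = haus X (m + 1) A := by
    rw [haus_eq_hausdorffMeasure, haus_eq_hausdorffMeasure]
    refine measure_congr (Filter.EventuallyLE.antisymm ?_ ?_)
    · exact ae_le_set.2 (measure_mono_null (t := frontier A) (fun x hx => ⟨hcl hx.1,
        fun h => hx.2 (interior_subset h)⟩) hnull)
    · exact ae_le_set.2 (measure_mono_null (t := frontier A) (fun x hx => ⟨subset_closure hx.1,
        fun h => hx.2 (subset_closure h)⟩) hnull)
  refine le_trans (iInf₂_le (closure (interior A)) ⟨⟨_, isOpen_interior, rfl⟩, hvol⟩) ?_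
  rw [Nat.add_sub_cancel, haus_eq_hausdorffMeasure, haus_eq_hausdorffMeasure]
  exact measure_mono hfr

/-- Same as `isoProfile_le_frontier`, transported along an isometry. -/
theorem isoProfile_le_frontier_of_isometry {X X' : Type*} [EMetricSpace X] [EMetricSpace X']
    [MeasurableSpace X'] [BorelSpace X'] (e : X ≃ᵢ X') (m : ℕ) (A : Set X') :
    isoProfile X (m + 1) ((Measure.hausdorffMeasure ((m + 1 : ℕ) : ℝ) : Measure X') A) ≤
      (Measure.hausdorffMeasure (m : ℝ) : Measure X') (frontier A) := by
  borelize X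
  have h := isoProfile_le_frontier m (e ⁻¹' A)
  have hf : frontier (e ⁻¹' A) = e ⁻¹' frontier A := (e.toHomeomorph.preimage_frontier A).symm
  rw [haus_eq_hausdorffMeasure, haus_eq_hausdorffMeasure, hf, e.hausdorffMeasure_preimage,
    e.hausdorffMeasure_preimage] at h
  exact h

/-- The quotient map `ℝ × Y → (ℝ / Lℤ) × Y`. -/
def wrap (L : ℝ) (Y : Type*) (p : WithLp 2 (ℝ × Y)) : WithLp 2 (AddCircle L × Y) :=
  WithLp.toLp 2 ((p.fst : AddCircle L), p.snd)

/-- Points of `ℝ × Y` whose first coordinate lies in `I`. -/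
def strip (Y : Type*) (I : Set ℝ) : Set (WithLp 2 (ℝ × Y)) := {p | p.fst ∈ I}

/-- Translation of the first coordinate. -/
def slide {Y : Type*} (a : ℝ) (p : WithLp 2 (ℝ × Y)) : WithLp 2 (ℝ × Y) :=
  WithLp.toLp 2 (p.fst + a, p.snd)

theorem edist_wrap {L : ℝ} (hL : 0 < L) {Y : Type*} [MetricSpace Y] {p q : WithLp 2 (ℝ × Y)}
    (h : |p.fst - q.fst| ≤ L / 2) : edist (wrap L Y p) (wrap L Y q) = edist p q := by
  have h2 : (0 : ℝ) < (2 : ℝ≥0∞).toReal := by norm_num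
  rw [WithLp.prod_edist_eq_add h2, WithLp.prod_edist_eq_add h2]
  have : edist ((p.fst : AddCircle L)) (q.fst : AddCircle L) = edist p.fst q.fst := by
    rw [edist_dist, edist_dist, dist_eq_norm, ← AddCircle.coe_sub, Real.dist_eq]
    rw [(AddCircle.norm_coe_eq_abs_iff L hL.ne').2 (by rwa [abs_of_pos hL])]
  simp only [wrap, WithLp.toLp_fst, WithLp.toLp_snd]
  rw [this]

theorem wrap_toLp_of_eq {L : ℝ} {Y : Type*} {s : ℝ} {z : WithLp 2 (AddCircle L × Y)}
    (h : (s : AddCircle L) = z.fst) : wrap L Y (WithLp.toLp 2 (s, z.snd)) = z := by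
  simp only [wrap, WithLp.toLp_fst, h]
  rfl

theorem hausdorffMeasure_wrap_strip {L : ℝ} (hL : 0 < L) {Y : Type*} [MetricSpace Y]
    [MeasurableSpace (WithLp 2 (ℝ × Y))] [BorelSpace (WithLp 2 (ℝ × Y))]
    [MeasurableSpace (WithLp 2 (AddCircle L × Y))] [BorelSpace (WithLp 2 (AddCircle L × Y))]
    {d : ℝ} (hd : 0 ≤ d) (I : Set ℝ) (hI : ∀ s ∈ I, ∀ t ∈ I, |s - t| ≤ L / 2)
    (A : Set (WithLp 2 (AddCircle L × Y))) :
    μH[d] (wrap L Y ⁻¹' A ∩ strip Y I) = μH[d] (A ∩ wrap L Y '' strip Y I) := by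
  let f : strip Y I → WithLp 2 (AddCircle L × Y) := fun p => wrap L Y p
  have hf : Isometry f := fun p q => edist_wrap hL (hI _ p.2 _ q.2)
  have h1 : A ∩ wrap L Y '' strip Y I = f '' (Subtype.val ⁻¹' (wrap L Y ⁻¹' A)) := by
    ext z; constructor
    · rintro ⟨hz, p, hp, rfl⟩; exact ⟨⟨p, hp⟩, hz, rfl⟩
    · rintro ⟨p, hp, rfl⟩; exact ⟨hp, p, p.2, rfl⟩
  rw [h1, hf.hausdorffMeasure_image (Or.inl hd),
    ← (isometry_subtype_coe (s := strip Y I)).hausdorffMeasure_image (Or.inl hd),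
    Subtype.image_preimage_coe, Set.inter_comm]

theorem hausdorffMeasure_wrap_preimage {L : ℝ} (hL : 0 < L) {Y : Type*} [MetricSpace Y]
    [SecondCountableTopology Y] [MeasurableSpace Y] [BorelSpace Y]
    {d : ℝ} (hd : 0 ≤ d) (I I' : Set ℝ) (hI : ∀ s ∈ I, ∀ t ∈ I, |s - t| ≤ L / 2)
    (hI' : ∀ s ∈ I', ∀ t ∈ I', |s - t| ≤ L / 2) (hm : MeasurableSet I) (hdisj : Disjoint I I')
    (hinj : Set.InjOn ((↑) : ℝ → AddCircle L) (I ∪ I'))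
    (hsurj : ∀ z : AddCircle L, ∃ s ∈ I ∪ I', (s : AddCircle L) = z)
    (A : Set (WithLp 2 (AddCircle L × Y))) :
    μH[d] (wrap L Y ⁻¹' A ∩ strip Y (I ∪ I')) = μH[d] A := by
  have hmi : MeasurableSet (wrap L Y '' strip Y I) := by
    have : wrap L Y '' strip Y I = WithLp.fst ⁻¹' (((↑) : ℝ → AddCircle L) '' I) := by
      ext z; constructor
      · rintro ⟨p, hp, rfl⟩; exact ⟨p.fst, hp, rfl⟩
      · rintro ⟨s, hs, h⟩
        exact ⟨WithLp.toLp 2 (s, z.snd), hs, wrap_toLp_of_eq h⟩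
    rw [this]
    refine (hm.image_of_continuousOn_injOn (AddCircle.continuous_mk' L).continuousOn
      (hinj.mono Set.subset_union_left)).preimage (by fun_prop)
  have hms : MeasurableSet (strip Y I) := hm.preimage
    (by fun_prop : Measurable (WithLp.fst : WithLp 2 (ℝ × Y) → ℝ))
  have hcompl : A \ wrap L Y '' strip Y I = A ∩ wrap L Y '' strip Y I' := by
    ext z; constructor
    · rintro ⟨hz, h⟩
      obtain ⟨s, hs, h2⟩ := hsurj z.fst
      have hz' : wrap L Y (WithLp.toLp 2 (s, z.snd)) = z := wrap_toLp_of_eq h2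
      refine ⟨hz, WithLp.toLp 2 (s, z.snd), hs.resolve_left fun hs => h ⟨_, hs, hz'⟩, hz'⟩
    · rintro ⟨hz, p, hp, rfl⟩
      refine ⟨hz, ?_⟩
      rintro ⟨p', hp', h⟩
      have : p'.fst = p.fst := hinj (Or.inl hp') (Or.inr hp) (congrArg WithLp.fst h)
      exact Set.disjoint_left.1 hdisj hp' (by rw [this]; exact hp)
  have hcompl' : (wrap L Y ⁻¹' A ∩ strip Y (I ∪ I')) \ strip Y I = wrap L Y ⁻¹' A ∩ strip Y I' := by
    ext p; constructor
    · rintro ⟨⟨h, h1⟩, h2⟩; exact ⟨h, h1.resolve_left h2⟩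
    · rintro ⟨h, h1⟩; exact ⟨⟨h, Or.inr h1⟩, fun h2 => Set.disjoint_left.1 hdisj h2 h1⟩
  have hint : (wrap L Y ⁻¹' A ∩ strip Y (I ∪ I')) ∩ strip Y I = wrap L Y ⁻¹' A ∩ strip Y I := by
    ext p; constructor
    · rintro ⟨⟨h, h1⟩, h2⟩; exact ⟨h, h2⟩
    · rintro ⟨h, h1⟩; exact ⟨⟨h, Or.inl h1⟩, h1⟩
  rw [← measure_inter_add_sdiff A hmi, hcompl, ← measure_inter_add_sdiff _ hms, hint, hcompl',
    hausdorffMeasure_wrap_strip hL hd I hI, hausdorffMeasure_wrap_strip hL hd I' hI']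

theorem hausdorffMeasure_wrap_Ico {L : ℝ} (hL : 0 < L) {Y : Type*} [MetricSpace Y]
    [SecondCountableTopology Y] [MeasurableSpace Y] [BorelSpace Y]
    {d : ℝ} (hd : 0 ≤ d) (x : ℝ) (A : Set (WithLp 2 (AddCircle L × Y))) :
    μH[d] (wrap L Y ⁻¹' A ∩ strip Y (Set.Ico x (x + L))) = μH[d] A := by
  have : Fact (0 < L) := ⟨hL⟩
  have hu : Set.Ico x (x + L / 2) ∪ Set.Ico (x + L / 2) (x + L) = Set.Ico x (x + L) :=
    Set.Ico_union_Ico_eq_Ico (by linarith) (by linarith)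
  rw [← hu]
  refine hausdorffMeasure_wrap_preimage hL hd _ _ ?_ ?_ measurableSet_Ico
    (Set.disjoint_left.2 fun s h h' => not_lt.2 h'.1 h.2) ?_ ?_ A
  · rintro s ⟨h1, h2⟩ t ⟨h3, h4⟩; rw [abs_le]; constructor <;> linarith
  · rintro s ⟨h1, h2⟩ t ⟨h3, h4⟩; rw [abs_le]; constructor <;> linarith
  · rw [hu]; intro s hs t ht h
    exact (AddCircle.coe_eq_coe_iff_of_mem_Ico hs ht).1 h
  · rw [hu]; intro z
    have : z ∈ ((↑) : ℝ → AddCircle L) '' Set.Ico x (x + L) := by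
      rw [AddCircle.coe_image_Ico_eq]; trivial
    exact this

theorem hausdorffMeasure_wrap_Ioc {L : ℝ} (hL : 0 < L) {Y : Type*} [MetricSpace Y]
    [SecondCountableTopology Y] [MeasurableSpace Y] [BorelSpace Y]
    {d : ℝ} (hd : 0 ≤ d) (x : ℝ) (A : Set (WithLp 2 (AddCircle L × Y))) :
    μH[d] (wrap L Y ⁻¹' A ∩ strip Y (Set.Ioc x (x + L))) = μH[d] A := by
  have : Fact (0 < L) := ⟨hL⟩
  have hu : Set.Ioc x (x + L / 2) ∪ Set.Ioc (x + L / 2) (x + L) = Set.Ioc x (x + L) :=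
    Set.Ioc_union_Ioc_eq_Ioc (by linarith) (by linarith)
  rw [← hu]
  refine hausdorffMeasure_wrap_preimage hL hd _ _ ?_ ?_ measurableSet_Ioc
    (Set.disjoint_left.2 fun s h h' => not_lt.2 h.2 h'.1) ?_ ?_ A
  · rintro s ⟨h1, h2⟩ t ⟨h3, h4⟩; rw [abs_le]; constructor <;> linarith
  · rintro s ⟨h1, h2⟩ t ⟨h3, h4⟩; rw [abs_le]; constructor <;> linarith
  · rw [hu]; intro s hs t ht h
    exact (AddCircle.coe_eq_coe_iff_of_mem_Ioc hs ht).1 h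
  · rw [hu]; intro z
    have : z ∈ ((↑) : ℝ → AddCircle L) '' Set.Ioc x (x + L) := by
      rw [AddCircle.coe_image_Ioc_eq]; trivial
    exact this

theorem continuous_wrap (L : ℝ) (Y : Type*) [MetricSpace Y] : Continuous (wrap L Y) := by
  unfold wrap
  have h1 : Continuous fun p : WithLp 2 (ℝ × Y) => (p.fst : AddCircle L) :=
    (AddCircle.continuous_mk' L).comp (WithLp.continuous_fst 2 ℝ Y)
  exact (WithLp.prod_continuous_toLp 2 _ _).comp (h1.prodMk (WithLp.continuous_snd 2 ℝ Y))

theorem isOpenMap_wrap (L : ℝ) (Y : Type*) [MetricSpace Y] : IsOpenMap (wrap L Y) := by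
  have h : IsOpenMap (Prod.map ((↑) : ℝ → AddCircle L) (id : Y → Y)) :=
    (QuotientAddGroup.isOpenMap_coe).prodMap IsOpenMap.id
  exact (WithLp.homeomorphProd 2 (AddCircle L) Y).symm.isOpenMap.comp
    (h.comp (WithLp.homeomorphProd 2 ℝ Y).isOpenMap)

theorem preimage_wrap_frontier (L : ℝ) {Y : Type*} [MetricSpace Y]
    (A : Set (WithLp 2 (AddCircle L × Y))) :
    wrap L Y ⁻¹' frontier A = frontier (wrap L Y ⁻¹' A) :=
  (isOpenMap_wrap L Y).preimage_frontier_eq_frontier_preimage (continuous_wrap L Y) A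

theorem slide_slide {Y : Type*} (a b : ℝ) (p : WithLp 2 (ℝ × Y)) :
    slide a (slide b p) = slide (b + a) p := by
  simp only [slide, WithLp.toLp_fst, WithLp.toLp_snd, add_assoc]

theorem slide_zero {Y : Type*} (p : WithLp 2 (ℝ × Y)) : slide 0 p = p := by
  simp only [slide, add_zero]; rfl

theorem slide_int_mul_mem {Y : Type*} {L : ℝ} {S : Set (WithLp 2 (ℝ × Y))}
    (hS : ∀ p, slide L p ∈ S ↔ p ∈ S) (k : ℤ) (p : WithLp 2 (ℝ × Y)) :
    slide (k * L) p ∈ S ↔ p ∈ S := by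
  induction k with
  | zero => simp [slide_zero]
  | succ k ih =>
    rw [← ih, ← hS (slide (((k : ℤ) : ℝ) * L) p), slide_slide]
    push_cast
    ring_nf
  | pred k ih =>
    rw [← ih, ← hS, slide_slide]
    push_cast
    ring_nf

theorem preimage_wrap_image {Y : Type*} {L : ℝ} {S : Set (WithLp 2 (ℝ × Y))}
    (hS : ∀ p, slide L p ∈ S ↔ p ∈ S) : wrap L Y ⁻¹' (wrap L Y '' S) = S := by
  refine Set.Subset.antisymm ?_ (Set.subset_preimage_image _ _)
  rintro p ⟨p', hp', h⟩
  have h1 : (p.fst : AddCircle L) = (p'.fst : AddCircle L) := (congrArg WithLp.fst h).symm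
  have h2 : p.snd = p'.snd := (congrArg (fun z => WithLp.snd z) h).symm
  rw [← sub_eq_zero, ← AddCircle.coe_sub, AddCircle.coe_eq_zero_iff] at h1
  obtain ⟨k, hk⟩ := h1
  have h3 : p = slide (k * L) p' := by
    have : p'.fst + k * L = p.fst := by rw [zsmul_eq_mul] at hk; linarith
    simp only [slide, this, ← h2]
    rfl
  rwa [h3, slide_int_mul_mem hS]

/-- Translation of the first coordinate, as an isometry. -/
def slideEquiv (Y : Type*) [MetricSpace Y] (a : ℝ) : WithLp 2 (ℝ × Y) ≃ᵢ WithLp 2 (ℝ × Y) :=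
  IsometryEquiv.withLpProdCongr 2 (IsometryEquiv.addRight a) (IsometryEquiv.refl Y)

theorem coe_slideEquiv (Y : Type*) [MetricSpace Y] (a : ℝ) : ⇑(slideEquiv Y a) = slide a := rfl

theorem slide_mem_frontier {Y : Type*} [MetricSpace Y] {L : ℝ} {S : Set (WithLp 2 (ℝ × Y))}
    (hS : ∀ p, slide L p ∈ S ↔ p ∈ S) (p : WithLp 2 (ℝ × Y)) :
    slide L p ∈ frontier S ↔ p ∈ frontier S := by
  have h : slideEquiv Y L ⁻¹' frontier S = frontier (slideEquiv Y L ⁻¹' S) :=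
    (slideEquiv Y L).toHomeomorph.preimage_frontier S
  have h' : slideEquiv Y L ⁻¹' S = S := Set.ext hS
  rw [h'] at h
  exact Set.ext_iff.1 h p

section Periodic

variable {Y : Type*} [MetricSpace Y] [SecondCountableTopology Y] [MeasurableSpace Y] [BorelSpace Y]
  {L : ℝ} {S : Set (WithLp 2 (ℝ × Y))}

theorem hausdorffMeasure_periodic_Ico (hL : 0 < L) (hS : ∀ p, slide L p ∈ S ↔ p ∈ S) {d : ℝ}
    (hd : 0 ≤ d) (x : ℝ) :
    μH[d] (S ∩ strip Y (Set.Ico x (x + L))) = μH[d] (wrap L Y '' S) := by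
  rw [← hausdorffMeasure_wrap_Ico hL hd x, preimage_wrap_image hS]

theorem hausdorffMeasure_periodic_Ioc (hL : 0 < L) (hS : ∀ p, slide L p ∈ S ↔ p ∈ S) {d : ℝ}
    (hd : 0 ≤ d) (x : ℝ) :
    μH[d] (S ∩ strip Y (Set.Ioc x (x + L))) = μH[d] (wrap L Y '' S) := by
  rw [← hausdorffMeasure_wrap_Ioc hL hd x, preimage_wrap_image hS]

end Periodic

theorem isoProfile_le_of_periodic {r : ℝ} (hr : 0 < r) {m : ℕ} {Y : Type*}
    [NormedAddCommGroup Y] [InnerProductSpace ℝ Y] [FiniteDimensional ℝ Y]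
    [MeasurableSpace Y] [BorelSpace Y] (hY : Module.finrank ℝ Y = m)
    {S : Set (WithLp 2 (ℝ × Y))} (hS : ∀ p, slide (2 * π * r) p ∈ S ↔ p ∈ S) :
    isoProfile (S1R r m) (m + 1)
        (μH[((m + 1 : ℕ) : ℝ)] (S ∩ strip Y (Set.Ico 0 (2 * π * r)))) ≤
      μH[(m : ℝ)] (frontier S ∩ strip Y (Set.Ico 0 (2 * π * r))) := by
  have hL : 0 < 2 * π * r := by positivity
  have e : EucSp m ≃ₗᵢ[ℝ] Y := ((stdOrthonormalBasis ℝ Y).reindex (finCongr hY)).repr.symm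
  let E : S1R r m ≃ᵢ WithLp 2 (Circ r × Y) :=
    IsometryEquiv.withLpProdCongr 2 (IsometryEquiv.refl _) e.toIsometryEquiv
  have h := isoProfile_le_frontier_of_isometry E m (wrap (2 * π * r) Y '' S)
  have h1 := hausdorffMeasure_wrap_Ico hL (d := ((m + 1 : ℕ) : ℝ)) (by positivity) 0
    (wrap (2 * π * r) Y '' S)
  have h2 := hausdorffMeasure_wrap_Ico hL (d := (m : ℝ)) (by positivity) 0
    (frontier (wrap (2 * π * r) Y '' S))
  rw [preimage_wrap_frontier, preimage_wrap_image hS, zero_add] at h2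
  rw [preimage_wrap_image hS, zero_add] at h1
  rw [h1, h2]
  exact h

section Euclidean

variable {Y : Type*} [NormedAddCommGroup Y] [InnerProductSpace ℝ Y]

/-- Dilation of the second factor. -/
def dilate (Y : Type*) [NormedAddCommGroup Y] [InnerProductSpace ℝ Y] (τ : ℝ) :
    WithLp 2 (ℝ × Y) →ₗ[ℝ] WithLp 2 (ℝ × Y) :=
  (WithLp.linearEquiv 2 ℝ (ℝ × Y)).symm.conj (LinearMap.prodMap LinearMap.id (τ • LinearMap.id))

theorem dilate_apply (τ : ℝ) (p : WithLp 2 (ℝ × Y)) :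
    dilate Y τ p = WithLp.toLp 2 (p.fst, τ • p.snd) := rfl

theorem finrank_withLp_prod [FiniteDimensional ℝ Y] {m : ℕ} (hY : Module.finrank ℝ Y = m) :
    Module.finrank ℝ (WithLp 2 (ℝ × Y)) = m + 1 := by
  rw [(WithLp.linearEquiv 2 ℝ (ℝ × Y)).finrank_eq, Module.finrank_prod, hY, Module.finrank_self,
    add_comm]

theorem lipschitzWith_dilate {τ : ℝ} (hτ : 0 ≤ τ) :
    LipschitzWith (Real.toNNReal (max τ 1)) (dilate Y τ) := by
  refine LipschitzWith.of_dist_le_mul fun p q => ?_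
  have h1 : 0 ≤ max τ 1 := le_trans hτ (le_max_left _ _)
  rw [dist_eq_norm, dist_eq_norm, ← map_sub, Real.coe_toNNReal _ h1]
  generalize p - q = v
  refine abs_le_of_sq_le_sq' ?_ (by positivity) |>.2
  rw [mul_pow, WithLp.prod_norm_sq_eq_of_L2, WithLp.prod_norm_sq_eq_of_L2, dilate_apply]
  simp only [WithLp.toLp_fst, WithLp.toLp_snd, norm_smul, mul_pow, Real.norm_eq_abs, sq_abs]
  have h2 : (1 : ℝ) ≤ (max τ 1) ^ 2 := one_le_pow₀ (le_max_right _ _)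
  have h3 : τ ^ 2 ≤ (max τ 1) ^ 2 := pow_le_pow_left₀ hτ (le_max_left _ _) 2
  nlinarith [mul_le_mul_of_nonneg_right h2 (sq_nonneg v.fst),
    mul_le_mul_of_nonneg_right h3 (sq_nonneg ‖v.snd‖)]

variable [FiniteDimensional ℝ Y] [MeasurableSpace Y] [BorelSpace Y] {m : ℕ}

theorem hausdorffMeasure_strip_singleton (hY : Module.finrank ℝ Y = m) (s : ℝ) :
    μH[((m + 1 : ℕ) : ℝ)] (strip Y {s}) = 0 := by
  have hiso : Isometry fun y : Y => (WithLp.toLp 2 (s, y) : WithLp 2 (ℝ × Y)) := by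
    intro y y'
    rw [WithLp.prod_edist_eq_add (by norm_num)]
    simp only [WithLp.toLp_fst, WithLp.toLp_snd, edist_self]
    rw [ENNReal.zero_rpow_of_pos (by norm_num), zero_add, ← ENNReal.rpow_mul]
    norm_num
  have hs : strip Y {s} = (fun y : Y => (WithLp.toLp 2 (s, y) : WithLp 2 (ℝ × Y))) '' Set.univ := by
    ext p; constructor
    · intro hp
      refine ⟨p.snd, trivial, ?_⟩
      have : s = p.fst := (Set.mem_singleton_iff.1 hp).symm
      simp only [this]; rfl
    · rintro ⟨y, -, rfl⟩; rfl
  rw [hs, hiso.hausdorffMeasure_image (Or.inl (by positivity))]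
  have h := hausdorffMeasure_of_dimH_lt (s := (Set.univ : Set Y)) (d := ((m + 1 : ℕ) : ℝ≥0)) (by
    rw [Real.dimH_univ_eq_finrank, hY]
    exact_mod_cast Nat.lt_succ_self m)
  simpa using h

theorem hausdorffMeasure_dilate_image (hY : Module.finrank ℝ Y = m) {τ : ℝ} (hτ : 0 ≤ τ)
    (S : Set (WithLp 2 (ℝ × Y))) :
    μH[((m + 1 : ℕ) : ℝ)] (dilate Y τ '' S) = ENNReal.ofReal (τ ^ m) * μH[((m + 1 : ℕ) : ℝ)] S := by
  have hdet : LinearMap.det (dilate Y τ) = τ ^ m := by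
    rw [dilate, LinearEquiv.conj_apply, LinearMap.comp_assoc, LinearMap.det_conj,
      LinearMap.det_prodMap, LinearMap.det_id, one_mul,
      LinearMap.det_smul, LinearMap.det_id, mul_one, hY]
  have h := Measure.addHaar_image_linearMap
    (μH[((Module.finrank ℝ (WithLp 2 (ℝ × Y)) : ℕ) : ℝ)] : Measure (WithLp 2 (ℝ × Y)))
    (dilate Y τ) S
  rw [hdet, abs_of_nonneg (by positivity)] at h
  rw [finrank_withLp_prod hY] at h
  exact h

/-- Rescaling the second factor adjusts the volume of a periodic set to a prescribed value. -/
theorem le_frontier_of_rescale (hY : Module.finrank ℝ Y = m) (hm : m ≠ 0) {L : ℝ} {J : ℝ≥0∞}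
    {V a : ℝ} (hV : 0 < V) (ha : 0 < a)
    (H : ∀ S : Set (WithLp 2 (ℝ × Y)), (∀ p, slide L p ∈ S ↔ p ∈ S) →
      μH[((m + 1 : ℕ) : ℝ)] (S ∩ strip Y (Set.Ico 0 L)) = ENNReal.ofReal V →
      J ≤ μH[(m : ℝ)] (frontier S ∩ strip Y (Set.Ico 0 L)))
    {S : Set (WithLp 2 (ℝ × Y))} (hS : ∀ p, slide L p ∈ S ↔ p ∈ S)
    (hSa : μH[((m + 1 : ℕ) : ℝ)] (S ∩ strip Y (Set.Ico 0 L)) = ENNReal.ofReal a) :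
    J ≤ ENNReal.ofReal (max (V / a) 1) * μH[(m : ℝ)] (frontier S ∩ strip Y (Set.Ico 0 L)) := by
  obtain ⟨τ, hτ, hτm⟩ : ∃ τ : ℝ, 0 < τ ∧ τ ^ m = V / a := by
    refine ⟨(V / a) ^ ((m : ℝ)⁻¹), by positivity, Real.rpow_inv_natCast_pow (by positivity) hm⟩
  have hinv : ∀ p, dilate Y τ (dilate Y τ⁻¹ p) = p := fun p => by
    simp only [dilate_apply, WithLp.toLp_fst, WithLp.toLp_snd, smul_inv_smul₀ hτ.ne']; rfl
  have hinv' : ∀ p, dilate Y τ⁻¹ (dilate Y τ p) = p := fun p => by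
    simp only [dilate_apply, WithLp.toLp_fst, WithLp.toLp_snd, inv_smul_smul₀ hτ.ne']; rfl
  let e : WithLp 2 (ℝ × Y) ≃ₜ WithLp 2 (ℝ × Y) :=
    { toFun := dilate Y τ
      invFun := dilate Y τ⁻¹
      left_inv := hinv'
      right_inv := hinv
      continuous_toFun := (lipschitzWith_dilate hτ.le).continuous
      continuous_invFun := (lipschitzWith_dilate (inv_nonneg.2 hτ.le)).continuous }
  have hstrip : ∀ B : Set (WithLp 2 (ℝ × Y)), e '' B ∩ strip Y (Set.Ico 0 L) =
      dilate Y τ '' (B ∩ strip Y (Set.Ico 0 L)) := by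
    intro B; ext p; constructor
    · rintro ⟨⟨q, hq, rfl⟩, h⟩; exact ⟨q, ⟨hq, h⟩, rfl⟩
    · rintro ⟨q, ⟨hq, h⟩, rfl⟩; exact ⟨⟨q, hq, rfl⟩, h⟩
  have hper : ∀ p, slide L p ∈ e '' S ↔ p ∈ e '' S := by
    intro p
    rw [e.image_eq_preimage_symm]
    exact hS (dilate Y τ⁻¹ p)
  have hvol : μH[((m + 1 : ℕ) : ℝ)] (e '' S ∩ strip Y (Set.Ico 0 L)) = ENNReal.ofReal V := by
    rw [hstrip, hausdorffMeasure_dilate_image hY hτ.le, hSa, ← ENNReal.ofReal_mul (by positivity),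
      hτm, div_mul_cancel₀ _ ha.ne']
  refine (H _ hper hvol).trans ?_
  rw [← e.image_frontier, hstrip]
  refine ((lipschitzWith_dilate hτ.le).hausdorffMeasure_image_le (Nat.cast_nonneg m) _).trans ?_
  gcongr
  rw [ENNReal.rpow_natCast, ← ENNReal.ofReal, ← ENNReal.ofReal_pow (by positivity)]
  refine ENNReal.ofReal_le_ofReal ?_
  rw [← hτm]
  rcases le_total τ 1 with h | h
  · rw [max_eq_right h, one_pow]; exact le_max_right _ _
  · rw [max_eq_left h]; exact le_max_left _ _

end Euclidean

/-- Reflection of the first coordinate, `s ↦ a - s`. -/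
def mirror {Y : Type*} (a : ℝ) (p : WithLp 2 (ℝ × Y)) : WithLp 2 (ℝ × Y) :=
  WithLp.toLp 2 (a - p.fst, p.snd)

/-- Reflection of the first coordinate, as an isometry. -/
def mirrorEquiv (Y : Type*) [MetricSpace Y] (a : ℝ) : WithLp 2 (ℝ × Y) ≃ᵢ WithLp 2 (ℝ × Y) :=
  IsometryEquiv.withLpProdCongr 2 (IsometryEquiv.subLeft a) (IsometryEquiv.refl Y)

theorem coe_mirrorEquiv (Y : Type*) [MetricSpace Y] (a : ℝ) : ⇑(mirrorEquiv Y a) = mirror a := rfl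

/-- The periodic zigzag folding the line onto the window `[x, x + ℓ]`. -/
def zigzag {Y : Type*} (x ℓ : ℝ) (p : WithLp 2 (ℝ × Y)) : WithLp 2 (ℝ × Y) :=
  WithLp.toLp 2 (x + ‖(p.fst : AddCircle (2 * ℓ))‖, p.snd)

theorem continuous_zigzag {Y : Type*} [MetricSpace Y] (x ℓ : ℝ) :
    Continuous (zigzag (Y := Y) x ℓ) := by
  unfold zigzag
  have h1 : Continuous fun p : WithLp 2 (ℝ × Y) => x + ‖(p.fst : AddCircle (2 * ℓ))‖ :=
    continuous_const.add (continuous_norm.comp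
      ((AddCircle.continuous_mk' (2 * ℓ)).comp (WithLp.continuous_fst 2 ℝ Y)))
  exact (WithLp.prod_continuous_toLp 2 _ _).comp (h1.prodMk (WithLp.continuous_snd 2 ℝ Y))

theorem zigzag_slide {Y : Type*} (x ℓ : ℝ) (p : WithLp 2 (ℝ × Y)) :
    zigzag x ℓ (slide (2 * ℓ) p) = zigzag x ℓ p := by
  simp only [zigzag, slide, WithLp.toLp_fst, WithLp.toLp_snd, AddCircle.coe_add_period]

theorem zigzag_of_nonneg {Y : Type*} {x ℓ : ℝ} {p : WithLp 2 (ℝ × Y)} (h0 : 0 ≤ p.fst)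
    (h1 : p.fst ≤ ℓ) (hℓ : 0 < ℓ) : zigzag x ℓ p = slide x p := by
  have : ‖(p.fst : AddCircle (2 * ℓ))‖ = p.fst := by
    rw [(AddCircle.norm_coe_eq_abs_iff _ (by positivity)).2, abs_of_nonneg h0]
    rw [abs_of_nonneg h0, abs_of_nonneg (by positivity)]; linarith
  simp only [zigzag, slide, this, add_comm]

theorem zigzag_of_nonpos {Y : Type*} {x ℓ : ℝ} {p : WithLp 2 (ℝ × Y)} (h0 : p.fst ≤ 0)
    (h1 : -ℓ ≤ p.fst) (hℓ : 0 < ℓ) : zigzag x ℓ p = mirror x p := by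
  have : ‖(p.fst : AddCircle (2 * ℓ))‖ = -p.fst := by
    rw [(AddCircle.norm_coe_eq_abs_iff _ (by positivity)).2, abs_of_nonpos h0]
    rw [abs_of_nonpos h0, abs_of_nonneg (by positivity)]; linarith
  simp only [zigzag, mirror, this, sub_eq_add_neg]

section Fold

variable {Y : Type*} [MetricSpace Y] [SecondCountableTopology Y] [MeasurableSpace Y] [BorelSpace Y]

theorem measurableSet_strip {I : Set ℝ} (hI : MeasurableSet I) : MeasurableSet (strip Y I) :=
  hI.preimage (by fun_prop : Measurable (WithLp.fst : WithLp 2 (ℝ × Y) → ℝ))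

theorem measure_inter_strip_union (μ : Measure (WithLp 2 (ℝ × Y))) (S : Set (WithLp 2 (ℝ × Y)))
    {I I' : Set ℝ} (hI : MeasurableSet I) (hd : Disjoint I I') :
    μ (S ∩ strip Y (I ∪ I')) = μ (S ∩ strip Y I) + μ (S ∩ strip Y I') := by
  rw [← measure_inter_add_sdiff (S ∩ strip Y (I ∪ I')) (measurableSet_strip hI)]
  congr 2
  · ext p; constructor
    · rintro ⟨⟨h, h1⟩, h2⟩; exact ⟨h, h2⟩
    · rintro ⟨h, h1⟩; exact ⟨⟨h, Or.inl h1⟩, h1⟩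
  · ext p; constructor
    · rintro ⟨⟨h, h1⟩, h2⟩; exact ⟨h, h1.resolve_left h2⟩
    · rintro ⟨h, h1⟩; exact ⟨⟨h, Or.inr h1⟩, fun h2 => Set.disjoint_left.1 hd h2 h1⟩

theorem measure_inter_strip_Ico (μ : Measure (WithLp 2 (ℝ × Y))) (S : Set (WithLp 2 (ℝ × Y)))
    {a b c : ℝ} (hab : a ≤ b) (hbc : b ≤ c) :
    μ (S ∩ strip Y (Set.Ico a c)) =
      μ (S ∩ strip Y (Set.Ico a b)) + μ (S ∩ strip Y (Set.Ico b c)) := by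
  rw [← measure_inter_strip_union μ S measurableSet_Ico
    (Set.disjoint_left.2 fun s h h' => not_lt.2 h'.1 h.2), Set.Ico_union_Ico_eq_Ico hab hbc]

theorem measure_inter_strip_Ioc (μ : Measure (WithLp 2 (ℝ × Y))) (S : Set (WithLp 2 (ℝ × Y)))
    {a b c : ℝ} (hab : a ≤ b) (hbc : b ≤ c) :
    μ (S ∩ strip Y (Set.Ioc a c)) =
      μ (S ∩ strip Y (Set.Ioc a b)) + μ (S ∩ strip Y (Set.Ioc b c)) := by
  rw [← measure_inter_strip_union μ S measurableSet_Ioc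
    (Set.disjoint_left.2 fun s h h' => not_lt.2 h.2 h'.1), Set.Ioc_union_Ioc_eq_Ioc hab hbc]

theorem slide_nat_mul_mem {Y : Type*} {L : ℝ} {S : Set (WithLp 2 (ℝ × Y))}
    (hS : ∀ p, slide L p ∈ S ↔ p ∈ S) (k : ℕ) (p : WithLp 2 (ℝ × Y)) :
    slide (k * L) p ∈ S ↔ p ∈ S := by
  exact_mod_cast slide_int_mul_mem hS k p

theorem hausdorffMeasure_periodic_mul {T : ℝ} (hT : 0 < T) {S : Set (WithLp 2 (ℝ × Y))}
    (hS : ∀ p, slide T p ∈ S ↔ p ∈ S) {d : ℝ} (hd : 0 ≤ d) (k : ℕ) :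
    μH[d] (S ∩ strip Y (Set.Ico 0 (k * T))) = k * μH[d] (wrap T Y '' S) := by
  induction k with
  | zero => simp [strip]
  | succ k ih =>
    rw [measure_inter_strip_Ico _ S (b := k * T) (by positivity) (by push_cast; nlinarith), ih,
      ← hausdorffMeasure_periodic_Ico hT hS hd (k * T)]
    push_cast
    rw [show ((k : ℝ) + 1) * T = (k : ℝ) * T + T by ring, add_mul, one_mul]

/-- Folding along a window: measure of one double window. -/
theorem hausdorffMeasure_zigzag_preimage {ℓ : ℝ} (hℓ : 0 < ℓ) (x : ℝ) (E : Set (WithLp 2 (ℝ × Y)))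
    {d : ℝ} (hd : 0 ≤ d) (k : ℕ) :
    μH[d] (zigzag x ℓ ⁻¹' E ∩ strip Y (Set.Ico 0 (k * (2 * ℓ)))) =
      k * (μH[d] (E ∩ strip Y (Set.Ioc x (x + ℓ))) + μH[d] (E ∩ strip Y (Set.Ico x (x + ℓ)))) := by
  have hper : ∀ p, slide (2 * ℓ) p ∈ zigzag x ℓ ⁻¹' E ↔ p ∈ zigzag x ℓ ⁻¹' E := fun p => by
    rw [Set.mem_preimage, zigzag_slide]; rfl
  rw [hausdorffMeasure_periodic_mul (by positivity) hper hd,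
    ← hausdorffMeasure_periodic_Ico (by positivity) hper hd (-ℓ),
    measure_inter_strip_Ico _ _ (b := 0) (by linarith) (by linarith)]
  congr 2
  · refine Eq.trans ?_ ((mirrorEquiv Y x).hausdorffMeasure_preimage d _)
    congr 1
    ext p
    simp only [Set.mem_inter_iff, Set.mem_preimage, coe_mirrorEquiv, strip, Set.mem_ofPred_eq,
      Set.mem_Ico, Set.mem_Ioc]
    constructor
    · rintro ⟨h, h1, h2⟩
      rw [zigzag_of_nonpos h2.le h1 hℓ] at h
      refine ⟨h, ?_, ?_⟩ <;> simp only [mirror, WithLp.toLp_fst] <;> linarith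
    · rintro ⟨h, h1, h2⟩
      simp only [mirror, WithLp.toLp_fst] at h1 h2
      refine ⟨?_, by linarith, by linarith⟩
      rw [zigzag_of_nonpos (by linarith) (by linarith) hℓ]; exact h
  · refine Eq.trans ?_ ((slideEquiv Y x).hausdorffMeasure_preimage d _)
    congr 1
    ext p
    simp only [Set.mem_inter_iff, Set.mem_preimage, coe_slideEquiv, strip, Set.mem_ofPred_eq,
      Set.mem_Ico]
    constructor
    · rintro ⟨h, h1, h2⟩
      rw [zigzag_of_nonneg h1 (by linarith) hℓ] at h
      refine ⟨h, ?_, ?_⟩ <;> simp only [slide, WithLp.toLp_fst] <;> linarith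
    · rintro ⟨h, h1, h2⟩
      simp only [slide, WithLp.toLp_fst] at h1 h2
      refine ⟨?_, by linarith, by linarith⟩
      rw [zigzag_of_nonneg (by linarith) (by linarith) hℓ]; exact h

end Fold

section FoldEuclidean

variable {Y : Type*} [NormedAddCommGroup Y] [InnerProductSpace ℝ Y] [FiniteDimensional ℝ Y]
  [MeasurableSpace Y] [BorelSpace Y] {m : ℕ}

theorem hausdorffMeasure_inter_strip_singleton (hY : Module.finrank ℝ Y = m)
    (S : Set (WithLp 2 (ℝ × Y))) (s : ℝ) : μH[((m + 1 : ℕ) : ℝ)] (S ∩ strip Y {s}) = 0 :=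
  measure_mono_null Set.inter_subset_right (hausdorffMeasure_strip_singleton hY s)

theorem hausdorffMeasure_inter_strip_Ico_eq_Ioo (hY : Module.finrank ℝ Y = m)
    (S : Set (WithLp 2 (ℝ × Y))) (a b : ℝ) :
    μH[((m + 1 : ℕ) : ℝ)] (S ∩ strip Y (Set.Ico a b)) =
      μH[((m + 1 : ℕ) : ℝ)] (S ∩ strip Y (Set.Ioo a b)) := by
  rcases lt_or_ge a b with h | h
  · rw [← Set.Ioo_union_left h, measure_inter_strip_union _ _ measurableSet_Ioo (by simp),
      hausdorffMeasure_inter_strip_singleton hY, add_zero]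
  · rw [Set.Ico_eq_empty (not_lt.2 h), Set.Ioo_eq_empty (not_lt.2 h)]

theorem hausdorffMeasure_inter_strip_Ioc_eq_Ioo (hY : Module.finrank ℝ Y = m)
    (S : Set (WithLp 2 (ℝ × Y))) (a b : ℝ) :
    μH[((m + 1 : ℕ) : ℝ)] (S ∩ strip Y (Set.Ioc a b)) =
      μH[((m + 1 : ℕ) : ℝ)] (S ∩ strip Y (Set.Ioo a b)) := by
  rcases lt_or_ge a b with h | h
  · rw [← Set.Ioo_union_right h, measure_inter_strip_union _ _ measurableSet_Ioo (by simp),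
      hausdorffMeasure_inter_strip_singleton hY, add_zero]
  · rw [Set.Ioc_eq_empty (not_lt.2 h), Set.Ioo_eq_empty (not_lt.2 h)]

/-- Folding a window and rescaling bounds the perimeter inside the window from below. -/
theorem le_frontier_window (hY : Module.finrank ℝ Y = m) (hm : m ≠ 0) {h : ℝ} (hh : 0 < h)
    {J : ℝ≥0∞} {V : ℝ} (hV : 0 < V)
    (H : ∀ S : Set (WithLp 2 (ℝ × Y)), (∀ p, slide (2 * h) p ∈ S ↔ p ∈ S) →
      μH[((m + 1 : ℕ) : ℝ)] (S ∩ strip Y (Set.Ico 0 (2 * h))) = ENNReal.ofReal V →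
      J ≤ μH[(m : ℝ)] (frontier S ∩ strip Y (Set.Ico 0 (2 * h))))
    (E : Set (WithLp 2 (ℝ × Y))) {k : ℕ} (hk : 0 < k) (x : ℝ) {w : ℝ} (hw : 0 < w)
    (hEw : μH[((m + 1 : ℕ) : ℝ)] (E ∩ strip Y (Set.Ico x (x + h / k))) = ENNReal.ofReal w) :
    J ≤ ENNReal.ofReal (max (V / (2 * k * w)) 1) *
      (k * (μH[(m : ℝ)] (frontier E ∩ strip Y (Set.Ioc x (x + h / k))) +
        μH[(m : ℝ)] (frontier E ∩ strip Y (Set.Ico x (x + h / k))))) := by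
  have hk' : (0 : ℝ) < k := Nat.cast_pos.2 hk
  have hℓ : 0 < h / k := by positivity
  have h2 : (k : ℝ) * (2 * (h / k)) = 2 * h := by field_simp
  have hper : ∀ p, slide (2 * h) p ∈ zigzag x (h / k) ⁻¹' E ↔ p ∈ zigzag x (h / k) ⁻¹' E := by
    rw [← h2]
    refine slide_nat_mul_mem (fun p => ?_) k
    rw [Set.mem_preimage, zigzag_slide]; rfl
  have hvol := hausdorffMeasure_zigzag_preimage hℓ x E (d := ((m + 1 : ℕ) : ℝ)) (by positivity) k
  rw [hausdorffMeasure_inter_strip_Ioc_eq_Ioo hY, ← hausdorffMeasure_inter_strip_Ico_eq_Ioo hY,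
    hEw, h2, ← ENNReal.ofReal_add hw.le hw.le, ← ENNReal.ofReal_natCast,
    ← ENNReal.ofReal_mul (by positivity), show (k : ℝ) * (w + w) = 2 * k * w by ring] at hvol
  refine (le_frontier_of_rescale hY hm hV (by positivity) H hper hvol).trans ?_
  gcongr
  rw [← hausdorffMeasure_zigzag_preimage hℓ x (frontier E) (by positivity) k, h2]
  gcongr
  exact (continuous_zigzag x (h / k)).frontier_preimage_subset E

end FoldEuclidean

theorem measure_polarization_gain {X : Type*} [MeasurableSpace X] (μ : Measure X)
    {E B K K' W : Set X} (hB : MeasurableSet B) (hK : MeasurableSet K)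
    (hW : MeasurableSet W) (hKK : K ⊆ K') (hWK : W ⊆ K' \ K) :
    μ (E ∩ K) + μ (B ∩ K') + μ (E ∩ W) ≤ μ (E ∩ B ∩ K) + μ ((E ∪ B) ∩ K') + μ (B ∩ W) := by
  have split : ∀ A : Set X, μ (A ∩ K') = μ (A ∩ K) + (μ (A ∩ W) + μ (A ∩ ((K' \ K) \ W))) := by
    intro A
    rw [← measure_inter_add_sdiff (A ∩ K') hK, ← measure_inter_add_sdiff ((A ∩ K') \ K) hW]
    congr 2
    · ext x; constructor
      · rintro ⟨⟨h, -⟩, h'⟩; exact ⟨h, h'⟩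
      · rintro ⟨h, h'⟩; exact ⟨⟨h, hKK h'⟩, h'⟩
    · congr 1
      ext x; constructor
      · rintro ⟨⟨⟨h, -⟩, -⟩, h'⟩; exact ⟨h, h'⟩
      · rintro ⟨h, h'⟩; exact ⟨⟨⟨h, (hWK h').1⟩, (hWK h').2⟩, h'⟩
    · congr 1
      ext x; constructor
      · rintro ⟨⟨⟨h, h1⟩, h2⟩, h3⟩; exact ⟨h, ⟨h1, h2⟩, h3⟩
      · rintro ⟨h, ⟨h1, h2⟩, h3⟩; exact ⟨⟨⟨h, h1⟩, h2⟩, h3⟩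
  have hmod : μ (E ∩ K) + μ (B ∩ K) = μ (E ∩ B ∩ K) + μ ((E ∪ B) ∩ K) := by
    have h := measure_union_add_inter (μ := μ) (E ∩ K) (hB.inter hK)
    rw [← h, add_comm]
    congr 2
    · ext x; simp only [Set.mem_inter_iff]; tauto
    · ext x; simp only [Set.mem_inter_iff, Set.mem_union]; tauto
  have h1 : μ (B ∩ ((K' \ K) \ W)) ≤ μ ((E ∪ B) ∩ ((K' \ K) \ W)) :=
    measure_mono (Set.inter_subset_inter_left _ Set.subset_union_right)
  have h2 : μ (E ∩ W) ≤ μ ((E ∪ B) ∩ W) :=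
    measure_mono (Set.inter_subset_inter_left _ Set.subset_union_left)
  rw [split B, split (E ∪ B)]
  calc μ (E ∩ K) + (μ (B ∩ K) + (μ (B ∩ W) + μ (B ∩ ((K' \ K) \ W)))) + μ (E ∩ W)
      = (μ (E ∩ K) + μ (B ∩ K)) + (μ (B ∩ W) + μ (B ∩ ((K' \ K) \ W)) + μ (E ∩ W)) := by ring
    _ ≤ (μ (E ∩ B ∩ K) + μ ((E ∪ B) ∩ K)) +
        (μ (B ∩ W) + μ ((E ∪ B) ∩ ((K' \ K) \ W)) + μ ((E ∪ B) ∩ W)) := by rw [hmod]; gcongr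
    _ = _ := by ring

theorem measure_frontier_inter_add_union_le {X : Type*} [TopologicalSpace X] [MeasurableSpace X]
    [OpensMeasurableSpace X] (ν : Measure X) (A B G : Set X) (hG : MeasurableSet G) :
    ν (frontier (A ∩ B) ∩ G) + ν (frontier (A ∪ B) ∩ G) ≤
      ν (frontier A ∩ G) + ν (frontier B ∩ G) := by
  have hm : ∀ C : Set X, MeasurableSet (frontier C ∩ G) := fun C =>
    isClosed_frontier.measurableSet.inter hG
  rw [← measure_union_add_inter _ (hm (A ∪ B)), ← measure_union_add_inter _ (hm B)]
  have h1 : frontier (A ∩ B) ⊆ frontier A ∪ frontier B := (frontier_inter_subset A B).trans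
    (Set.union_subset_union Set.inter_subset_left Set.inter_subset_right)
  have h2 : frontier (A ∪ B) ⊆ frontier A ∪ frontier B := (frontier_union_subset A B).trans
    (Set.union_subset_union Set.inter_subset_left Set.inter_subset_right)
  gcongr ν ?_ + ν ?_
  · rw [← Set.union_inter_distrib_right, ← Set.union_inter_distrib_right]
    exact Set.inter_subset_inter_left _ (Set.union_subset h1 h2)
  · rintro x ⟨⟨h3, hx⟩, ⟨h4, -⟩⟩
    exact ⟨⟨⟨closure_mono Set.inter_subset_left h3.1,
      fun h => h4.2 (interior_mono Set.subset_union_left h)⟩, hx⟩,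
      ⟨⟨closure_mono Set.inter_subset_right h3.1,
      fun h => h4.2 (interior_mono Set.subset_union_right h)⟩, hx⟩⟩

theorem mirror_mirror {Y : Type*} (a : ℝ) (p : WithLp 2 (ℝ × Y)) : mirror a (mirror a p) = p := by
  change WithLp.toLp 2 (a - (a - p.fst), p.snd) = p
  rw [_root_.sub_sub_cancel]; rfl

/-- Sign function of the two half circles cut out by the reflection `s ↦ 2c - s` modulo `2h`. -/
def halfSign {Y : Type*} (h c : ℝ) (p : WithLp 2 (ℝ × Y)) : ℝ := Real.sin (π / h * (p.fst - c))

/-- Two-point rearrangement (polarization) with respect to `s ↦ 2c - s`. -/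
def polarize {Y : Type*} (h c : ℝ) (E : Set (WithLp 2 (ℝ × Y))) : Set (WithLp 2 (ℝ × Y)) :=
  {p | (p ∈ E ∧ mirror (2 * c) p ∈ E) ∨
    (halfSign h c p ≤ 0 ∧ (p ∈ E ∨ mirror (2 * c) p ∈ E))}

theorem halfSign_mirror {Y : Type*} (h c : ℝ) (p : WithLp 2 (ℝ × Y)) :
    halfSign h c (mirror (2 * c) p) = -halfSign h c p := by
  simp only [halfSign, mirror, WithLp.toLp_fst, ← Real.sin_neg]
  congr 1; ring

theorem halfSign_slide {Y : Type*} {h : ℝ} (hh : 0 < h) (c : ℝ) (p : WithLp 2 (ℝ × Y)) :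
    halfSign h c (slide (2 * h) p) = halfSign h c p := by
  simp only [halfSign, slide, WithLp.toLp_fst]
  rw [show π / h * (p.fst + 2 * h - c) = π / h * (p.fst - c) + 2 * π by field_simp; ring,
    Real.sin_add_two_pi]

theorem continuous_halfSign {Y : Type*} [MetricSpace Y] (h c : ℝ) :
    Continuous (halfSign (Y := Y) h c) := by
  have := WithLp.continuous_fst 2 ℝ Y
  unfold halfSign
  fun_prop

theorem slide_mem_polarize {Y : Type*} {h : ℝ} (hh : 0 < h) (c : ℝ) {E : Set (WithLp 2 (ℝ × Y))}
    (hE : ∀ p, slide (2 * h) p ∈ E ↔ p ∈ E) (p : WithLp 2 (ℝ × Y)) :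
    slide (2 * h) p ∈ polarize h c E ↔ p ∈ polarize h c E := by
  have h1 : mirror (2 * c) (slide (2 * h) p) ∈ E ↔ mirror (2 * c) p ∈ E := by
    rw [← hE (mirror (2 * c) (slide (2 * h) p))]
    have : slide (2 * h) (mirror (2 * c) (slide (2 * h) p)) = mirror (2 * c) p := by
      simp only [slide, mirror, WithLp.toLp_fst, WithLp.toLp_snd]
      congr 2; ring
    rw [this]
  simp only [polarize, Set.mem_ofPred_eq, h1, hE, halfSign_slide hh]

theorem slide_mem_interior {Y : Type*} [MetricSpace Y] {L : ℝ} {S : Set (WithLp 2 (ℝ × Y))}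
    (hS : ∀ p, slide L p ∈ S ↔ p ∈ S) (p : WithLp 2 (ℝ × Y)) :
    slide L p ∈ interior S ↔ p ∈ interior S := by
  have h : slideEquiv Y L ⁻¹' interior S = interior (slideEquiv Y L ⁻¹' S) :=
    (slideEquiv Y L).toHomeomorph.preimage_interior S
  have h' : slideEquiv Y L ⁻¹' S = S := Set.ext hS
  rw [h'] at h
  exact Set.ext_iff.1 h p

theorem mem_of_halfSign_eq_zero {Y : Type*} {h c : ℝ} (hh : 0 < h) {S : Set (WithLp 2 (ℝ × Y))}
    (hS : ∀ p, slide (2 * h) p ∈ S ↔ p ∈ S) {p : WithLp 2 (ℝ × Y)} (hp : halfSign h c p = 0)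
    (hpS : p ∈ S) : mirror (2 * c) p ∈ S := by
  obtain ⟨k, hk⟩ := Real.sin_eq_zero_iff.1 hp
  have h1 : p.fst - c = k * h := by
    have := Real.pi_pos
    field_simp at hk
    linarith
  have h2 : mirror (2 * c) p = slide (((-k : ℤ) : ℝ) * (2 * h)) p := by
    simp only [mirror, slide]
    congr 2; push_cast; linarith
  rw [h2, slide_int_mul_mem hS]
  exact hpS

theorem halfSign_pos {Y : Type*} {h : ℝ} (hh : 0 < h) {c : ℝ} {p : WithLp 2 (ℝ × Y)} (h1 : c < p.fst)
    (h2 : p.fst < c + h) : 0 < halfSign h c p := by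
  have := Real.pi_pos
  refine Real.sin_pos_of_pos_of_lt_pi (by have := sub_pos.2 h1; positivity) ?_
  calc π / h * (p.fst - c) < π / h * h := by gcongr; linarith
    _ = π := by field_simp

theorem halfSign_neg {Y : Type*} {h : ℝ} (hh : 0 < h) {c : ℝ} {p : WithLp 2 (ℝ × Y)} (h1 : c - h < p.fst)
    (h2 : p.fst < c) : halfSign h c p < 0 := by
  rw [← neg_pos, ← halfSign_mirror]
  exact halfSign_pos hh (by simp only [mirror, WithLp.toLp_fst]; linarith)
    (by simp only [mirror, WithLp.toLp_fst]; linarith)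

theorem polarize_inter_strip {Y : Type*} {h : ℝ} (hh : 0 < h) (c : ℝ)
    (E : Set (WithLp 2 (ℝ × Y))) :
    polarize h c E ∩ strip Y (Set.Ioo c (c + h)) =
      E ∩ mirror (2 * c) ⁻¹' E ∩ strip Y (Set.Ioo c (c + h)) := by
  ext p
  refine and_congr_left fun h2 => ?_
  have := halfSign_pos hh h2.1 h2.2
  simp [polarize, this.not_ge]

theorem mirror_preimage_polarize_inter_strip {Y : Type*} {h : ℝ} (hh : 0 < h) (c : ℝ)
    (E : Set (WithLp 2 (ℝ × Y))) :
    mirror (2 * c) ⁻¹' polarize h c E ∩ strip Y (Set.Ioo c (c + h)) =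
      (E ∪ mirror (2 * c) ⁻¹' E) ∩ strip Y (Set.Ioo c (c + h)) := by
  ext p
  refine and_congr_left fun hp => ?_
  have := halfSign_pos hh hp.1 hp.2
  simp only [polarize, Set.mem_ofPred_eq, mirror_mirror, halfSign_mirror, Set.mem_preimage,
    Set.mem_union]
  constructor
  · rintro (h | ⟨-, h⟩)
    · exact Or.inl h.2
    · exact h.symm
  · intro h; exact Or.inr ⟨by linarith, h.symm⟩

section Polarize

variable {Y : Type*} [MetricSpace Y] {h : ℝ} {E : Set (WithLp 2 (ℝ × Y))}

theorem frontier_polarize_wall (hh : 0 < h) (c : ℝ) (hE : ∀ p, slide (2 * h) p ∈ E ↔ p ∈ E)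
    {p : WithLp 2 (ℝ × Y)} (hp : halfSign h c p = 0) (hpf : p ∈ frontier (polarize h c E)) :
    p ∈ frontier E := by
  have hc : Continuous (mirror (Y := Y) (2 * c)) := (mirrorEquiv Y (2 * c)).continuous
  have hEc : ∀ p, slide (2 * h) p ∈ Eᶜ ↔ p ∈ Eᶜ := fun p => not_congr (hE p)
  refine ⟨?_, fun hi => ?_⟩
  · by_contra hn
    have hi : p ∈ interior Eᶜ := by rwa [interior_compl]
    have hi' := mem_of_halfSign_eq_zero hh (slide_mem_interior hEc) hp hi
    have ho : IsOpen (interior Eᶜ ∩ mirror (2 * c) ⁻¹' interior Eᶜ) :=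
      isOpen_interior.inter (isOpen_interior.preimage hc)
    have hsub : interior Eᶜ ∩ mirror (2 * c) ⁻¹' interior Eᶜ ⊆ (polarize h c E)ᶜ := by
      rintro q ⟨h1, h2⟩ h3
      have h1 := interior_subset h1
      have h2 := interior_subset h2
      rcases h3 with ⟨h3, -⟩ | ⟨-, h3 | h3⟩
      · exact h1 h3
      · exact h1 h3
      · exact h2 h3
    have := interior_maximal hsub ho ⟨hi, hi'⟩
    rw [interior_compl] at this
    exact this hpf.1
  · have hi' := mem_of_halfSign_eq_zero hh (slide_mem_interior hE) hp hi
    have ho : IsOpen (interior E ∩ mirror (2 * c) ⁻¹' interior E) :=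
      isOpen_interior.inter (isOpen_interior.preimage hc)
    exact hpf.2 (interior_maximal (fun q hq =>
      Or.inl ⟨interior_subset hq.1, interior_subset hq.2⟩) ho ⟨hi, hi'⟩)

theorem frontier_polarize_pos (c : ℝ) {p : WithLp 2 (ℝ × Y)} (hp : 0 < halfSign h c p)
    (hpf : p ∈ frontier (polarize h c E)) : p ∈ frontier (E ∩ mirror (2 * c) ⁻¹' E) := by
  have ho : IsOpen {q : WithLp 2 (ℝ × Y) | 0 < halfSign h c q} :=
    isOpen_lt continuous_const (continuous_halfSign h c)
  have h1 : polarize h c E ∩ {q | 0 < halfSign h c q} =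
      (E ∩ mirror (2 * c) ⁻¹' E) ∩ {q | 0 < halfSign h c q} := by
    ext q; simp only [polarize, Set.mem_inter_iff, Set.mem_ofPred_eq, Set.mem_preimage]
    constructor
    · rintro ⟨h1 | ⟨h1, -⟩, h2⟩
      · exact ⟨h1, h2⟩
      · exact absurd h2 (not_lt.2 h1)
    · rintro ⟨h1, h2⟩; exact ⟨Or.inl h1, h2⟩
  have h2 := frontier_inter_open_inter (s := polarize h c E) ho
  have h3 := frontier_inter_open_inter (s := E ∩ mirror (2 * c) ⁻¹' E) ho
  rw [h1, h3] at h2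
  exact (h2.symm.subset ⟨hpf, hp⟩).1

theorem frontier_polarize_neg (c : ℝ) {p : WithLp 2 (ℝ × Y)} (hp : halfSign h c p < 0)
    (hpf : p ∈ frontier (polarize h c E)) : p ∈ frontier (E ∪ mirror (2 * c) ⁻¹' E) := by
  have ho : IsOpen {q : WithLp 2 (ℝ × Y) | halfSign h c q < 0} :=
    isOpen_lt (continuous_halfSign h c) continuous_const
  have h1 : polarize h c E ∩ {q | halfSign h c q < 0} =
      (E ∪ mirror (2 * c) ⁻¹' E) ∩ {q | halfSign h c q < 0} := by
    ext q; simp only [polarize, Set.mem_inter_iff, Set.mem_ofPred_eq, Set.mem_preimage, Set.mem_union]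
    constructor
    · rintro ⟨h1 | ⟨-, h1⟩, h2⟩
      · exact ⟨Or.inl h1.1, h2⟩
      · exact ⟨h1, h2⟩
    · rintro ⟨h1, h2⟩; exact ⟨Or.inr ⟨h2.le, h1⟩, h2⟩
  have h2 := frontier_inter_open_inter (s := polarize h c E) ho
  have h3 := frontier_inter_open_inter (s := E ∪ mirror (2 * c) ⁻¹' E) ho
  rw [h1, h3] at h2
  exact (h2.symm.subset ⟨hpf, hp⟩).1

variable [SecondCountableTopology Y] [MeasurableSpace Y] [BorelSpace Y]

theorem measurableSet_polarize (h c : ℝ) (hE : MeasurableSet E) :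
    MeasurableSet (polarize h c E) := by
  have hm : MeasurableSet (mirror (2 * c) ⁻¹' E) :=
    hE.preimage (mirrorEquiv Y (2 * c)).continuous.measurable
  have hs : MeasurableSet {p : WithLp 2 (ℝ × Y) | halfSign h c p ≤ 0} :=
    (isClosed_le (continuous_halfSign h c) continuous_const).measurableSet
  exact (hE.inter hm).union (hs.inter (hE.union hm))

theorem hausdorffMeasure_mirror_strip (d c h : ℝ) (S : Set (WithLp 2 (ℝ × Y))) :
    μH[d] (mirror (2 * c) ⁻¹' S ∩ strip Y (Set.Ioo c (c + h))) =
      μH[d] (S ∩ strip Y (Set.Ioo (c - h) c)) := by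
  refine Eq.trans ?_ ((mirrorEquiv Y (2 * c)).hausdorffMeasure_preimage d _)
  congr 1
  ext p
  simp only [Set.mem_inter_iff, Set.mem_preimage, coe_mirrorEquiv, strip, Set.mem_ofPred_eq,
    Set.mem_Ioo]
  refine and_congr_right fun _ => ?_
  simp only [mirror, WithLp.toLp_fst]
  constructor <;> rintro ⟨h1, h2⟩ <;> constructor <;> linarith

theorem measure_inter_strip_Ico_wall (μ : Measure (WithLp 2 (ℝ × Y))) (S : Set (WithLp 2 (ℝ × Y)))
    (hh : 0 < h) (c : ℝ) :
    μ (S ∩ strip Y (Set.Ico (c - h) (c + h))) =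
      μ (S ∩ strip Y (Set.Ioo (c - h) c)) + μ (S ∩ strip Y (Set.Ioo c (c + h))) +
        μ (S ∩ strip Y {c - h, c}) := by
  rw [← measure_inter_strip_union _ _ measurableSet_Ioo
      (Set.disjoint_left.2 fun s h1 h2 => (not_lt.2 h1.2.le) h2.1),
    ← measure_inter_strip_union _ _ (measurableSet_Ioo.union measurableSet_Ioo)]
  · congr 3
    ext s
    simp only [Set.mem_union, Set.mem_Ico, Set.mem_Ioo, Set.mem_insert_iff, Set.mem_singleton_iff]
    constructor
    · rintro ⟨h1, h2⟩
      rcases h1.eq_or_lt with h1 | h1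
      · exact Or.inr (Or.inl h1.symm)
      · rcases lt_trichotomy s c with h3 | h3 | h3
        · exact Or.inl (Or.inl ⟨h1, h3⟩)
        · exact Or.inr (Or.inr h3)
        · exact Or.inl (Or.inr ⟨h3, h2⟩)
    · rintro ((⟨h1, h2⟩ | ⟨h1, h2⟩) | (h1 | h1)) <;> constructor <;> linarith
  · rw [Set.disjoint_left]
    rintro s (⟨h1, h2⟩ | ⟨h1, h2⟩) (h3 | (h3 : s = c)) <;> linarith

/-- Polarization does not increase perimeter. -/
theorem hausdorffMeasure_frontier_polarize_le (hh : 0 < h) (c : ℝ)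
    (hE : ∀ p, slide (2 * h) p ∈ E ↔ p ∈ E) (d : ℝ) :
    μH[d] (frontier (polarize h c E) ∩ strip Y (Set.Ico (c - h) (c + h))) ≤
      μH[d] (frontier E ∩ strip Y (Set.Ico (c - h) (c + h))) := by
  have hmir : ∀ S : Set (WithLp 2 (ℝ × Y)),
      mirror (2 * c) ⁻¹' frontier S = frontier (mirror (2 * c) ⁻¹' S) := fun S =>
    (mirrorEquiv Y (2 * c)).toHomeomorph.preimage_frontier S
  have hinv : mirror (2 * c) ⁻¹' (E ∪ mirror (2 * c) ⁻¹' E) = E ∪ mirror (2 * c) ⁻¹' E := by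
    ext p; simp only [Set.mem_preimage, Set.mem_union, mirror_mirror, or_comm]
  rw [measure_inter_strip_Ico_wall _ _ hh, measure_inter_strip_Ico_wall _ _ hh]
  refine add_le_add ?_ (measure_mono ?_)
  · rw [← hausdorffMeasure_mirror_strip d c h (frontier E), hmir, add_comm,
      add_comm (μH[d] (frontier (mirror (2 * c) ⁻¹' E) ∩ _))]
    refine le_trans ?_ (measure_frontier_inter_add_union_le μH[d] E (mirror (2 * c) ⁻¹' E)
      (strip Y (Set.Ioo c (c + h))) (measurableSet_strip measurableSet_Ioo))
    refine add_le_add (measure_mono ?_) ?_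
    · rintro p ⟨h1, h2⟩
      exact ⟨frontier_polarize_pos c (halfSign_pos hh h2.1 h2.2) h1, h2⟩
    · rw [← hinv, ← hmir, hausdorffMeasure_mirror_strip d c h]
      refine measure_mono ?_
      rintro p ⟨h1, h2⟩
      exact ⟨frontier_polarize_neg c (halfSign_neg hh h2.1 h2.2) h1, h2⟩
  · rintro p ⟨h1, h2⟩
    refine ⟨frontier_polarize_wall hh c hE ?_ h1, h2⟩
    rcases h2 with h2 | h2
    · simp only [halfSign, h2]
      rw [show π / h * (c - h - c) = -π by field_simp; ring, Real.sin_neg, Real.sin_pi, neg_zero]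
    · simp only [halfSign, Set.mem_singleton_iff.1 h2, sub_self, mul_zero, Real.sin_zero]

end Polarize

section PolarizeVolume

variable {Y : Type*} [NormedAddCommGroup Y] [InnerProductSpace ℝ Y] [FiniteDimensional ℝ Y]
  [MeasurableSpace Y] [BorelSpace Y] {m : ℕ} {h : ℝ} {E : Set (WithLp 2 (ℝ × Y))}

theorem hausdorffMeasure_strip_Ico_split (hY : Module.finrank ℝ Y = m) (hh : 0 < h) (c : ℝ)
    (S : Set (WithLp 2 (ℝ × Y))) :
    μH[((m + 1 : ℕ) : ℝ)] (S ∩ strip Y (Set.Ico (c - h) (c + h))) =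
      μH[((m + 1 : ℕ) : ℝ)] (S ∩ strip Y (Set.Ioo c (c + h))) +
      μH[((m + 1 : ℕ) : ℝ)] (mirror (2 * c) ⁻¹' S ∩ strip Y (Set.Ioo c (c + h))) := by
  have hz : μH[((m + 1 : ℕ) : ℝ)] (S ∩ strip Y {c - h, c}) = 0 := by
    have : strip Y {c - h, c} = strip Y {c - h} ∪ strip Y {c} := rfl
    rw [this, Set.inter_union_distrib_left]
    exact measure_union_null (hausdorffMeasure_inter_strip_singleton hY S _)
      (hausdorffMeasure_inter_strip_singleton hY S _)
  rw [measure_inter_strip_Ico_wall _ _ hh, hz, add_zero, hausdorffMeasure_mirror_strip, add_comm]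

/-- Polarization improves the mass of symmetric sets that are favored by the reflection. -/
theorem hausdorffMeasure_polarize_gain (hY : Module.finrank ℝ Y = m) (hh : 0 < h) (c : ℝ)
    (hE : MeasurableSet E) {K W : Set (WithLp 2 (ℝ × Y))} (hK : MeasurableSet K)
    (hW : MeasurableSet W) (hKG : ∀ p, 0 < halfSign h c p → p ∈ K → mirror (2 * c) p ∈ K)
    (hWG : W ⊆ strip Y (Set.Ioo c (c + h))) (hWK : Disjoint W K)
    (hWK' : ∀ p ∈ W, mirror (2 * c) p ∈ K) :
    μH[((m + 1 : ℕ) : ℝ)] (E ∩ K ∩ strip Y (Set.Ico (c - h) (c + h))) +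
        μH[((m + 1 : ℕ) : ℝ)] (E ∩ W) ≤
      μH[((m + 1 : ℕ) : ℝ)] (polarize h c E ∩ K ∩ strip Y (Set.Ico (c - h) (c + h))) +
        μH[((m + 1 : ℕ) : ℝ)] (E ∩ mirror (2 * c) ⁻¹' W) := by
  set G := strip Y (Set.Ioo c (c + h)) with hG
  have hGm : MeasurableSet G := measurableSet_strip measurableSet_Ioo
  have hσm : Measurable (mirror (Y := Y) (2 * c)) := (mirrorEquiv Y (2 * c)).continuous.measurable
  rw [hausdorffMeasure_strip_Ico_split hY hh, hausdorffMeasure_strip_Ico_split hY hh, ← hG]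
  have h1 : polarize h c E ∩ K ∩ G = E ∩ mirror (2 * c) ⁻¹' E ∩ (K ∩ G) := by
    rw [Set.inter_right_comm, hG, polarize_inter_strip hh, ← hG]
    ext p; simp only [Set.mem_inter_iff]; tauto
  have h2 : mirror (2 * c) ⁻¹' (polarize h c E ∩ K) ∩ G =
      (E ∪ mirror (2 * c) ⁻¹' E) ∩ (mirror (2 * c) ⁻¹' K ∩ G) := by
    rw [Set.preimage_inter, Set.inter_right_comm, hG, mirror_preimage_polarize_inter_strip hh,
      ← hG]
    ext p; simp only [Set.mem_inter_iff]; tauto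
  have h3 : μH[((m + 1 : ℕ) : ℝ)] (E ∩ mirror (2 * c) ⁻¹' W) =
      μH[((m + 1 : ℕ) : ℝ)] (mirror (2 * c) ⁻¹' E ∩ W) := by
    refine Eq.trans ?_ ((mirrorEquiv Y (2 * c)).hausdorffMeasure_preimage _ _)
    congr 1
    ext p
    simp only [Set.mem_inter_iff, Set.mem_preimage, coe_mirrorEquiv, mirror_mirror]
  have h4 : mirror (2 * c) ⁻¹' (E ∩ K) ∩ G =
      mirror (2 * c) ⁻¹' E ∩ (mirror (2 * c) ⁻¹' K ∩ G) := by
    rw [Set.preimage_inter, Set.inter_assoc]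
  rw [h1, h2, h3, h4, Set.inter_assoc]
  exact measure_polarization_gain _ (hE.preimage hσm) (hK.inter hGm) hW
    (fun p hp => ⟨hKG p (halfSign_pos hh hp.2.1 hp.2.2) hp.1, hp.2⟩)
    (fun p hp => ⟨⟨hWK' p hp, hWG hp⟩, fun h => Set.disjoint_left.1 hWK hp h.1⟩)

/-- Polarization preserves volume. -/
theorem hausdorffMeasure_polarize (hY : Module.finrank ℝ Y = m) (hh : 0 < h) (c : ℝ)
    (hE : MeasurableSet E) :
    μH[((m + 1 : ℕ) : ℝ)] (polarize h c E ∩ strip Y (Set.Ico (c - h) (c + h))) =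
      μH[((m + 1 : ℕ) : ℝ)] (E ∩ strip Y (Set.Ico (c - h) (c + h))) := by
  have hB : MeasurableSet (mirror (2 * c) ⁻¹' E) :=
    hE.preimage (mirrorEquiv Y (2 * c)).continuous.measurable
  have hGm : MeasurableSet (strip Y (Set.Ioo c (c + h))) := measurableSet_strip measurableSet_Ioo
  rw [hausdorffMeasure_strip_Ico_split hY hh, hausdorffMeasure_strip_Ico_split hY hh,
    polarize_inter_strip hh, mirror_preimage_polarize_inter_strip hh,
    ← measure_union_add_inter _ (hB.inter hGm), add_comm, Set.union_inter_distrib_right]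
  congr 2
  ext p; simp only [Set.mem_inter_iff]; tauto

end PolarizeVolume

theorem exists_forall_le_add_of_bounded {ι : Type*} {C : Set ι} (hC : C.Nonempty) (F : ι → ℝ≥0∞)
    {B η : ℝ≥0∞} (hB : B ≠ ∞) (hη : η ≠ 0) (hF : ∀ i ∈ C, F i ≤ B) :
    ∃ i ∈ C, ∀ j ∈ C, F j ≤ F i + η := by
  have hs : sSup (F '' C) ≠ ∞ := by
    refine ne_top_of_le_ne_top hB (sSup_le ?_)
    rintro _ ⟨i, hi, rfl⟩
    exact hF i hi
  by_cases h0 : sSup (F '' C) = 0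
  · obtain ⟨i, hi⟩ := hC
    exact ⟨i, hi, fun j hj => (le_sSup (Set.mem_image_of_mem F hj)).trans (by rw [h0]; exact zero_le)⟩
  · obtain ⟨_, ⟨i, hi, rfl⟩, h⟩ := lt_sSup_iff.1 (ENNReal.sub_lt_self hs h0 hη)
    refine ⟨i, hi, fun j hj => (le_sSup (Set.mem_image_of_mem F hj)).trans ?_⟩
    exact tsub_le_iff_right.1 h.le

/-- The `2h`-periodic set of points whose first coordinate lies in `[-r, r]` modulo `2h`. -/
def cap (Y : Type*) (h r : ℝ) : Set (WithLp 2 (ℝ × Y)) :=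
  {p | Real.cos (π / h * r) ≤ Real.cos (π / h * p.fst)}

theorem slide_mem_cap {Y : Type*} {h : ℝ} (hh : 0 < h) (r : ℝ) (p : WithLp 2 (ℝ × Y)) :
    slide (2 * h) p ∈ cap Y h r ↔ p ∈ cap Y h r := by
  simp only [cap, slide, Set.mem_ofPred_eq, WithLp.toLp_fst]
  rw [show π / h * (p.fst + 2 * h) = π / h * p.fst + 2 * π by field_simp, Real.cos_add_two_pi]

theorem mirror_mem_cap {Y : Type*} {h c r : ℝ} (hh : 0 < h) (hc : 0 ≤ c) (hch : c ≤ h)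
    {p : WithLp 2 (ℝ × Y)} (hp : 0 ≤ halfSign h c p) (hpr : p ∈ cap Y h r) :
    mirror (2 * c) p ∈ cap Y h r := by
  simp only [cap, Set.mem_ofPred_eq] at hpr ⊢
  refine hpr.trans ?_
  rw [← sub_nonneg, Real.cos_sub_cos]
  simp only [mirror, WithLp.toLp_fst]
  rw [show (π / h * (2 * c - p.fst) + π / h * p.fst) / 2 = π / h * c by ring,
    show (π / h * (2 * c - p.fst) - π / h * p.fst) / 2 = -(π / h * (p.fst - c)) by ring,
    Real.sin_neg]
  have h1 : 0 ≤ Real.sin (π / h * c) := by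
    have := Real.pi_pos
    refine Real.sin_nonneg_of_nonneg_of_le_pi (by positivity) ?_
    calc π / h * c ≤ π / h * h := by gcongr
      _ = π := by field_simp
  have := mul_nonneg h1 hp
  simp only [halfSign] at this
  linarith

theorem mem_cap_of_abs_le {Y : Type*} {h r : ℝ} (hh : 0 < h) (hrh : r ≤ h)
    {p : WithLp 2 (ℝ × Y)} (hp : |p.fst| ≤ r) : p ∈ cap Y h r := by
  have := Real.pi_pos
  have h1 : Real.cos (π / h * p.fst) = Real.cos (π / h * |p.fst|) := by
    rw [← Real.cos_abs (π / h * p.fst), abs_mul, abs_of_pos (by positivity : 0 < π / h)]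
  simp only [cap, Set.mem_ofPred_eq]
  rw [h1]
  refine Real.cos_le_cos_of_nonneg_of_le_pi (by positivity) ?_ (by gcongr)
  calc π / h * r ≤ π / h * h := by gcongr
    _ = π := by field_simp

theorem notMem_cap {Y : Type*} {h r : ℝ} (hh : 0 < h) (hr : 0 ≤ r)
    {p : WithLp 2 (ℝ × Y)} (h1 : r < p.fst) (h2 : p.fst < 2 * h - r) : p ∉ cap Y h r := by
  have := Real.pi_pos
  simp only [cap, Set.mem_ofPred_eq, not_le]
  rcases le_total p.fst h with h3 | h3
  · refine Real.cos_lt_cos_of_nonneg_of_le_pi (by positivity) ?_ (by gcongr)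
    calc π / h * p.fst ≤ π / h * h := by gcongr
      _ = π := by field_simp
  · rw [← Real.cos_two_pi_sub (π / h * p.fst),
      show 2 * π - π / h * p.fst = π / h * (2 * h - p.fst) by field_simp]
    refine Real.cos_lt_cos_of_nonneg_of_le_pi (by positivity) ?_ (by gcongr; linarith)
    calc π / h * (2 * h - p.fst) ≤ π / h * h := by gcongr; linarith
      _ = π := by field_simp

theorem measurableSet_cap {Y : Type*} [MetricSpace Y] [SecondCountableTopology Y]
    [MeasurableSpace Y] [BorelSpace Y] (h r : ℝ) : MeasurableSet (cap Y h r) := by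
  have := WithLp.continuous_fst 2 ℝ Y
  exact (isClosed_le continuous_const (by fun_prop)).measurableSet

theorem hausdorffMeasure_periodic_Ico_congr {Y : Type*} [MetricSpace Y]
    [SecondCountableTopology Y] [MeasurableSpace Y] [BorelSpace Y] {h : ℝ} (hh : 0 < h)
    {S : Set (WithLp 2 (ℝ × Y))} (hS : ∀ p, slide (2 * h) p ∈ S ↔ p ∈ S) {d : ℝ} (hd : 0 ≤ d)
    (c : ℝ) : μH[d] (S ∩ strip Y (Set.Ico (c - h) (c + h))) =
      μH[d] (S ∩ strip Y (Set.Ico 0 (2 * h))) := by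
  have h1 := hausdorffMeasure_periodic_Ico (by positivity) hS hd (c - h)
  have h2 := hausdorffMeasure_periodic_Ico (by positivity) hS hd 0
  rw [show c - h + 2 * h = c + h by ring] at h1
  rw [h1, ← h2, zero_add]

section NearSymmetric

variable {Y : Type*} [NormedAddCommGroup Y] [InnerProductSpace ℝ Y] [FiniteDimensional ℝ Y]
  [MeasurableSpace Y] [BorelSpace Y] {m : ℕ} {h : ℝ}

/-- Iterated polarization: a periodic set may be replaced by one of the same volume and at most
the same perimeter that carries, up to a prescribed error, at least as much mass in a window
inside `[-r i, r i]` as in any congruent window outside. -/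
theorem exists_nearly_symmetric (hY : Module.finrank ℝ Y = m) (hh : 0 < h)
    {E₀ : Set (WithLp 2 (ℝ × Y))} (hE₀ : MeasurableSet E₀)
    (hper : ∀ p, slide (2 * h) p ∈ E₀ ↔ p ∈ E₀)
    (hfin : μH[((m + 1 : ℕ) : ℝ)] (E₀ ∩ strip Y (Set.Ico 0 (2 * h))) ≠ ∞)
    {ι : Type*} (s : Finset ι) (r : ι → ℝ) (hr : ∀ i ∈ s, 0 ≤ r i ∧ r i ≤ h) {η : ℝ≥0∞}
    (hη : η ≠ 0) :
    ∃ E : Set (WithLp 2 (ℝ × Y)), (∀ p, slide (2 * h) p ∈ E ↔ p ∈ E) ∧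
      μH[((m + 1 : ℕ) : ℝ)] (E ∩ strip Y (Set.Ico 0 (2 * h))) =
        μH[((m + 1 : ℕ) : ℝ)] (E₀ ∩ strip Y (Set.Ico 0 (2 * h))) ∧
      μH[(m : ℝ)] (frontier E ∩ strip Y (Set.Ico 0 (2 * h))) ≤
        μH[(m : ℝ)] (frontier E₀ ∩ strip Y (Set.Ico 0 (2 * h))) ∧
      ∀ i ∈ s, ∀ a b ρ, 0 ≤ ρ → r i ≤ a → a + ρ ≤ 2 * h - r i → -r i ≤ b → b + ρ ≤ r i →
        μH[((m + 1 : ℕ) : ℝ)] (E ∩ strip Y (Set.Ioo a (a + ρ))) ≤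
          μH[((m + 1 : ℕ) : ℝ)] (E ∩ strip Y (Set.Ioo b (b + ρ))) + η := by
  classical
  set μ : Measure (WithLp 2 (ℝ × Y)) := μH[((m + 1 : ℕ) : ℝ)] with hμ
  set P := strip Y (Set.Ico 0 (2 * h)) with hP
  let C : Set (Set (WithLp 2 (ℝ × Y))) := {E | MeasurableSet E ∧
    (∀ p, slide (2 * h) p ∈ E ↔ p ∈ E) ∧ μ (E ∩ P) = μ (E₀ ∩ P) ∧
    μH[(m : ℝ)] (frontier E ∩ P) ≤ μH[(m : ℝ)] (frontier E₀ ∩ P)}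
  let F : Set (WithLp 2 (ℝ × Y)) → ℝ≥0∞ := fun E => ∑ i ∈ s, μ (E ∩ cap Y h (r i) ∩ P)
  have hFle : ∀ E ∈ C, F E ≤ s.card * μ (E₀ ∩ P) := by
    rintro E ⟨-, -, h3, -⟩
    refine (Finset.sum_le_card_nsmul s _ (μ (E₀ ∩ P)) fun i _ => ?_).trans (nsmul_eq_mul _ _).le
    rw [← h3]
    exact measure_mono (Set.inter_subset_inter_left _ Set.inter_subset_left)
  have hB : (s.card : ℝ≥0∞) * μ (E₀ ∩ P) ≠ ∞ := ENNReal.mul_ne_top (ENNReal.natCast_ne_top _) hfin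
  obtain ⟨E, ⟨hE1, hE2, hE3, hE4⟩, hmax⟩ :=
    exists_forall_le_add_of_bounded (C := C) ⟨E₀, hE₀, hper, rfl, le_rfl⟩ F hB hη hFle
  refine ⟨E, hE2, hE3, hE4, fun i hi a b ρ hρ ha haρ hb hbρ => ?_⟩
  obtain ⟨hri, hrh⟩ := hr i hi
  set c := (a + b + ρ) / 2 with hc
  have hc0 : 0 ≤ c := by rw [hc]; linarith
  have hch : c ≤ h := by rw [hc]; linarith
  have hpol := slide_mem_polarize hh c hE2
  have hmem : polarize h c E ∈ C := by
    refine ⟨measurableSet_polarize h c hE1, hpol, ?_, ?_⟩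
    · rw [← hE3, hP, ← hausdorffMeasure_periodic_Ico_congr hh hpol (by positivity) c,
        ← hausdorffMeasure_periodic_Ico_congr hh hE2 (by positivity) c]
      exact hausdorffMeasure_polarize hY hh c hE1
    · refine le_trans ?_ hE4
      rw [hP, ← hausdorffMeasure_periodic_Ico_congr hh (slide_mem_frontier hpol) (by positivity) c,
        ← hausdorffMeasure_periodic_Ico_congr hh (slide_mem_frontier hE2) (by positivity) c]
      exact hausdorffMeasure_frontier_polarize_le hh c hE2 _
  have hgain : ∀ j ∈ s, ∀ W : Set (WithLp 2 (ℝ × Y)), MeasurableSet W →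
      W ⊆ strip Y (Set.Ioo c (c + h)) → Disjoint W (cap Y h (r j)) →
      (∀ p ∈ W, mirror (2 * c) p ∈ cap Y h (r j)) →
      μ (E ∩ cap Y h (r j) ∩ P) + μ (E ∩ W) ≤
        μ (polarize h c E ∩ cap Y h (r j) ∩ P) + μ (E ∩ mirror (2 * c) ⁻¹' W) := by
    intro j _ W h1 h2 h3 h4
    have h5 := hausdorffMeasure_polarize_gain hY hh c hE1 (measurableSet_cap h (r j)) h1
      (fun p hp => mirror_mem_cap hh hc0 hch hp.le) h2 h3 h4
    rwa [hausdorffMeasure_periodic_Ico_congr hh (S := E ∩ cap Y h (r j))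
        (fun p => and_congr (hE2 p) (slide_mem_cap hh _ p)) (by positivity) c,
      hausdorffMeasure_periodic_Ico_congr hh (S := polarize h c E ∩ cap Y h (r j))
        (fun p => and_congr (hpol p) (slide_mem_cap hh _ p)) (by positivity) c] at h5
  have hmono : ∀ j ∈ s, μ (E ∩ cap Y h (r j) ∩ P) ≤ μ (polarize h c E ∩ cap Y h (r j) ∩ P) := by
    intro j hj
    simpa using hgain j hj ∅ MeasurableSet.empty (Set.empty_subset _) (Set.empty_disjoint _)
      (fun p hp => absurd hp (Set.notMem_empty p))
  have hW := hgain i hi (strip Y (Set.Ioo a (a + ρ))) (measurableSet_strip measurableSet_Ioo)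
    (fun p hp => ⟨by linarith [hp.1], by linarith [hp.2]⟩)
    (Set.disjoint_left.2 fun p hp => notMem_cap hh hri (by linarith [hp.1]) (by linarith [hp.2]))
    (fun p hp => mem_cap_of_abs_le hh hrh (by
      simp only [mirror, WithLp.toLp_fst]
      rw [abs_le]
      constructor <;> linarith [hp.1, hp.2]))
  have hpre : mirror (2 * c) ⁻¹' strip Y (Set.Ioo a (a + ρ)) = strip Y (Set.Ioo b (b + ρ)) := by
    ext p
    simp only [strip, Set.mem_preimage, Set.mem_ofPred_eq, mirror, WithLp.toLp_fst, Set.mem_Ioo]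
    constructor <;> rintro ⟨h1, h2⟩ <;> constructor <;> linarith
  rw [hpre] at hW
  have hFE : F E ≠ ∞ := ne_top_of_le_ne_top hB (hFle E ⟨hE1, hE2, hE3, hE4⟩)
  have hsum : F E + μ (E ∩ strip Y (Set.Ioo a (a + ρ))) ≤
      F (polarize h c E) + μ (E ∩ strip Y (Set.Ioo b (b + ρ))) := by
    simp only [F]
    rw [← Finset.add_sum_erase s _ hi, ← Finset.add_sum_erase s _ hi, add_right_comm,
      add_right_comm (μ (polarize h c E ∩ cap Y h (r i) ∩ P))]
    exact add_le_add hW (Finset.sum_le_sum fun j hj => hmono j (Finset.mem_of_mem_erase hj))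
  refine (ENNReal.add_le_add_iff_left hFE).1 (hsum.trans ?_)
  calc F (polarize h c E) + μ (E ∩ strip Y (Set.Ioo b (b + ρ)))
      ≤ (F E + η) + μ (E ∩ strip Y (Set.Ioo b (b + ρ))) := by gcongr; exact hmax _ hmem
    _ = _ := by ring

end NearSymmetric

/-- Increments over cells enumerated downwards compare termwise with increments over cells
enumerated upwards. -/
theorem sub_le_sub_add_of_cells_down {M : ℝ → ℝ} {δ η x y : ℝ} {k : ℕ}
    (H : ∀ j < k, M (x + (j + 1) * δ) - M (x + j * δ) ≤
      M (y - j * δ) - M (y - (j + 1) * δ) + η) :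
    M (x + k * δ) - M x ≤ M y - M (y - k * δ) + k * η := by
  have h1 := Finset.sum_range_sub (fun j : ℕ => M (x + j * δ)) k
  have h2 := Finset.sum_range_sub (fun j : ℕ => - M (y - j * δ)) k
  have h3 := Finset.sum_le_sum fun j (hj : j ∈ Finset.range k) => H j (Finset.mem_range.1 hj)
  rw [Finset.sum_add_distrib, Finset.sum_const, Finset.card_range, nsmul_eq_mul] at h3
  simp only [Nat.cast_add, Nat.cast_one, Nat.cast_zero, zero_mul, add_zero, sub_zero,
    neg_sub_neg] at h1 h2
  linarith

theorem exists_balance {D : ℝ → ℝ} (hD : Continuous D) {a b ε : ℝ} (hab : a ≤ b) (hε : 0 ≤ ε)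
    (ha : -ε ≤ D a) (hb : D b ≤ ε) : ∃ y ∈ Set.Icc a b, |D y| ≤ ε := by
  by_cases h1 : -ε ≤ D b
  · exact ⟨b, Set.right_mem_Icc.2 hab, abs_le.2 ⟨h1, hb⟩⟩
  by_cases h2 : D a ≤ ε
  · exact ⟨a, Set.left_mem_Icc.2 hab, abs_le.2 ⟨ha, h2⟩⟩
  · push Not at h1 h2
    obtain ⟨y, hy, hy0⟩ := intermediate_value_Icc' hab hD.continuousOn
      (show (0 : ℝ) ∈ Set.Icc (D b) (D a) from ⟨by linarith, by linarith⟩)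
    exact ⟨y, hy, by rw [hy0, abs_zero]; exact hε⟩

theorem sub_le_div_of_cells {M : ℝ → ℝ} {δ r w V : ℝ} {n : ℕ} (hn : 0 < n)
    (hr : 2 * r = n * δ) (hV : M r - M (-r) ≤ V)
    (H : ∀ j < n, w ≤ M (-r + j * δ + δ) - M (-r + j * δ)) : w ≤ V / n := by
  have h1 := Finset.sum_range_sub (fun j : ℕ => M (-r + j * δ)) n
  have h3 := Finset.sum_le_sum fun j (hj : j ∈ Finset.range n) => H j (Finset.mem_range.1 hj)
  rw [Finset.sum_const, Finset.card_range, nsmul_eq_mul] at h3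
  simp only [Nat.cast_add, Nat.cast_one, Nat.cast_zero, zero_mul, add_zero, ← hr] at h1
  rw [show -r + 2 * r = r by ring] at h1
  rw [le_div_iff₀ (by positivity)]
  have h4 : ∀ j : ℕ, -r + ((j : ℝ) + 1) * δ = -r + j * δ + δ := fun j => by ring
  simp only [h4] at h1
  linarith

theorem two_mul_le_of_cells {M N : ℝ → ℝ} {δ p V e x : ℝ} {q : ℕ} (hp : 0 ≤ p)
    {κ : ℝ} (hN : ∀ x, 2 * p * min ((M (x + δ) - M x) / V) κ ≤ N (x + δ) - N x)
    (H : ∀ j < q, (M (x + j * δ + δ) - M (x + j * δ)) / V - e ≤ κ) (he : 0 ≤ e) :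
    2 * p * ((M (x + q * δ) - M x) / V - q * e) ≤ N (x + q * δ) - N x := by
  have h1 := Finset.sum_range_sub (fun j : ℕ => M (x + j * δ)) q
  have h2 := Finset.sum_range_sub (fun j : ℕ => N (x + j * δ)) q
  have h4 : ∀ j : ℕ, x + ((j : ℝ) + 1) * δ = x + j * δ + δ := fun j => by ring
  simp only [Nat.cast_add, Nat.cast_one, Nat.cast_zero, zero_mul, add_zero, h4] at h1 h2
  rw [← h1, ← h2, Finset.sum_div, ← nsmul_eq_mul (q), ← Finset.card_range q, ← Finset.sum_const,
    Finset.card_range, ← Finset.sum_sub_distrib, Finset.mul_sum]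
  refine Finset.sum_le_sum fun j hj => le_trans ?_ (hN _)
  exact mul_le_mul_of_nonneg_left
    (le_min (sub_le_self _ he) (H j (Finset.mem_range.1 hj))) (by positivity)

theorem error_terms_le {h L δ k n q e ε : ℝ} (hh : 0 < h) (hL : 2 * h ≤ L) (hk : 1 ≤ k)
    (hn : n = 2 * k - 1) (hδ : δ = h / k) (hq : q ≤ (L - 2 * h) / δ)
    (he : e = 1 / n - 1 / (2 * k) + ε) (hε : ε = 1 / k ^ 3) :
    1 - (3 + 2 * (L / h)) / k ≤ 1 - k * ε - (1 / n + 1 / k ^ 3) - q * e := by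
  have hk0 : 0 < k := by linarith
  have hn0 : 0 < n := by linarith
  have h3 : 1 / k ^ 3 ≤ 1 / k ^ 2 :=
    one_div_le_one_div_of_le (by positivity) (pow_le_pow_right₀ hk (by norm_num))
  have h2 : 1 / k ^ 2 ≤ 1 / k := by
    simpa using one_div_le_one_div_of_le (by positivity) (pow_le_pow_right₀ hk one_le_two)
  have h1 : 1 / n ≤ 1 / k := one_div_le_one_div_of_le hk0 (by linarith)
  have h4 : k * ε = 1 / k ^ 2 := by rw [hε]; field_simp
  have h9 : 1 / n - 1 / (2 * k) ≤ 1 / k ^ 2 := by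
    rw [div_sub_div _ _ (by positivity) (by positivity),
      div_le_div_iff₀ (by positivity) (by positivity), hn]
    nlinarith
  have h10 : 1 / (2 * k) ≤ 1 / n := one_div_le_one_div_of_le hn0 (by linarith)
  have h11 : 0 < 1 / k ^ 3 := by positivity
  have h5 : e ≤ 2 / k ^ 2 := by
    have h6 : 2 / k ^ 2 = 1 / k ^ 2 + 1 / k ^ 2 := by ring
    rw [he, hε]
    linarith
  have h6 : q ≤ L / h * k := by
    refine hq.trans ?_
    rw [hδ, div_div_eq_mul_div, div_mul_eq_mul_div]
    gcongr
    linarith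
  have h12 : 0 ≤ L / h * k := mul_nonneg (div_nonneg (by linarith) hh.le) hk0.le
  have h7 : q * e ≤ 2 * (L / h) / k := by
    calc q * e ≤ (L / h * k) * e := mul_le_mul_of_nonneg_right h6 (by rw [he, hε]; linarith)
      _ ≤ (L / h * k) * (2 / k ^ 2) := mul_le_mul_of_nonneg_left h5 h12
      _ = 2 * (L / h) / k := by field_simp
  have h8 : (3 + 2 * (L / h)) / k = 1 / k + 1 / k + 1 / k + 2 * (L / h) / k := by ring
  linarith

theorem le_of_windows {M N : ℝ → ℝ} (hMc : Continuous M) (hM : Monotone M) (hN : Monotone N)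
    {L h V P p : ℝ} (hh : 0 < h) (hL : 2 * h ≤ L) (hV : 0 < V) (hp : 0 ≤ p)
    (hMV : ∀ x, M (x + L) = M x + V) (hNP : ∀ x, N (x + L) ≤ N x + 2 * P) {k : ℕ} (hk : 0 < k)
    (hwin : ∀ x, 2 * p * min ((M (x + h) - M x) / V) (1 / 2) ≤ N (x + h) - N x)
    (hwink : ∀ x, 2 * p * min ((M (x + h / k) - M x) / V) (1 / (2 * k)) ≤ N (x + h / k) - N x)
    (hcmp : ∀ i < k, ∀ a b ρ, 0 ≤ ρ → ((i : ℝ) + 1 / 2) * (h / k) ≤ a →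
      a + ρ ≤ L - ((i : ℝ) + 1 / 2) * (h / k) → -(((i : ℝ) + 1 / 2) * (h / k)) ≤ b →
      b + ρ ≤ ((i : ℝ) + 1 / 2) * (h / k) → M (a + ρ) - M a ≤ M (b + ρ) - M b + V / k ^ 3) :
    p * (1 - (3 + 2 * (L / h)) / k) ≤ P := by
  have hk0 : (0 : ℝ) < k := by exact_mod_cast hk
  have hk1 : (1 : ℝ) ≤ k := by exact_mod_cast hk
  obtain ⟨δ, hδ⟩ : ∃ δ, δ = h / k := ⟨_, rfl⟩
  obtain ⟨η, hη⟩ : ∃ η, η = V / (k : ℝ) ^ 3 := ⟨_, rfl⟩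
  have hkδ : k * δ = h := by rw [hδ]; field_simp
  have hδ0 : 0 < δ := by rw [hδ]; positivity
  have hη0 : 0 ≤ η := by rw [hη]; positivity
  rw [← hδ] at hwink hcmp
  rw [← hη] at hcmp
  have hjk : ∀ j < k, ((j : ℝ) + 1) * δ ≤ h := by
    intro j hj
    rw [← hkδ]
    have : ((j : ℝ) + 1) ≤ k := by exact_mod_cast hj
    gcongr
  have hb1 : M (δ / 2 + h) - M (δ / 2) ≤ M (δ / 2) - M (δ / 2 - h) + k * η := by
    rw [← hkδ]
    refine sub_le_sub_add_of_cells_down fun j hj => ?_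
    have := hjk j hj
    have h0 : 0 ≤ (j : ℝ) * δ := by positivity
    have := hcmp j hj (δ / 2 + j * δ) (δ / 2 - (j + 1) * δ) δ hδ0.le (by linarith) (by linarith)
      (by linarith) (by linarith)
    rwa [show δ / 2 + j * δ + δ = δ / 2 + (j + 1) * δ by ring,
      show δ / 2 - (j + 1) * δ + δ = δ / 2 - j * δ by ring] at this
  have hb2 : M (-δ / 2) - M (-δ / 2 - h) ≤ M (-δ / 2 + h) - M (-δ / 2) + k * η := by
    have key := sub_le_sub_add_of_cells_down (M := fun x => -M (-x)) (δ := δ) (η := η)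
      (x := δ / 2) (y := δ / 2) (k := k) fun j hj => by
        have := hjk j hj
        have h0 : 0 ≤ (j : ℝ) * δ := by positivity
        have := hcmp j hj (L - δ / 2 - (j + 1) * δ) (-δ / 2 + j * δ) δ hδ0.le
          (by linarith) (by linarith) (by linarith) (by linarith)
        rw [show L - δ / 2 - (j + 1) * δ + δ = -(δ / 2 + j * δ) + L by ring, hMV,
          show L - δ / 2 - (j + 1) * δ = -(δ / 2 + (j + 1) * δ) + L by ring, hMV,
          show -δ / 2 + j * δ + δ = -(δ / 2 - (j + 1) * δ) by ring,
          show -δ / 2 + j * δ = -(δ / 2 - j * δ) by ring] at this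
        linarith
    rw [hkδ] at key
    rw [show -(δ / 2 + h) = -δ / 2 - h by ring, show -(δ / 2) = -δ / 2 by ring,
      show -(δ / 2 - h) = -δ / 2 + h by ring] at key
    linarith
  obtain ⟨y, ⟨hy1, hy2⟩, hy⟩ := exists_balance (D := fun y => M (y + h) + M (y - h) - 2 * M y)
    (by fun_prop) (a := -δ / 2) (b := δ / 2) (ε := k * η) (by linarith) (by positivity)
    (by linarith) (by linarith)
  rw [abs_le] at hy
  obtain ⟨hyl, hyr⟩ := hy
  have hMy : M (y - h + L) = M (y - h) + V := hMV _
  have hout : M (y + h) ≤ M (y - h + L) := hM (by linarith)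
  have hkη : 0 ≤ k * η := by positivity
  have hw : ∀ x, M (x + h) - M x ≤ V / 2 + k * η / 2 →
      2 * p * ((M (x + h) - M x) / V - k * η / (2 * V)) ≤ N (x + h) - N x := by
    intro x hx
    refine le_trans ?_ (hwin x)
    refine mul_le_mul_of_nonneg_left (le_min ?_ ?_) (by positivity)
    · exact sub_le_self _ (by positivity)
    · rw [div_sub_div _ _ hV.ne' (by positivity), div_le_div_iff₀ (by positivity) (by norm_num)]
      nlinarith
  have hN1 := hw (y - h) (by rw [sub_add_cancel]; linarith)
  have hN2 := hw y (by linarith)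
  rw [sub_add_cancel] at hN1
  obtain ⟨n, hn⟩ : ∃ n : ℕ, n = 2 * k - 1 := ⟨_, rfl⟩
  have hn0 : 0 < n := by omega
  have hnk : (n : ℝ) = 2 * k - 1 := by rw [hn, Nat.cast_sub (by omega)]; push_cast; ring
  obtain ⟨r, hr⟩ : ∃ r, r = (((k - 1 : ℕ) : ℝ) + 1 / 2) * δ := ⟨_, rfl⟩
  have hr' : r = h - δ / 2 := by
    rw [hr, Nat.cast_sub (by omega), ← hkδ]; push_cast; ring
  have hcell : ∀ a ρ, 0 ≤ ρ → ρ ≤ δ → r ≤ a → a + ρ ≤ L - r →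
      M (a + ρ) - M a ≤ V / n + η := by
    intro a ρ hρ hρδ ha haρ
    rw [← sub_le_iff_le_add]
    refine sub_le_div_of_cells (M := M) hn0 (δ := δ) (r := r) (by rw [hr', hnk, ← hkδ]; ring) ?_ ?_
    · have := hMV (-r)
      have := hM (show r ≤ -r + L by linarith)
      linarith
    · intro j hj
      have h0 : 0 ≤ (j : ℝ) * δ := by positivity
      have h1 : ((j : ℝ) + 1) * δ ≤ n * δ := by
        have : ((j : ℝ) + 1) ≤ n := by exact_mod_cast hj
        gcongr
      rw [hnk] at h1
      have h2 : 2 * r = (2 * k - 1) * δ := by rw [hr', ← hkδ]; ring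
      have := hcmp (k - 1) (by omega) a (-r + j * δ) ρ hρ (by rw [← hr]; linarith)
        (by rw [← hr]; linarith) (by rw [← hr]; linarith) (by rw [← hr]; linarith)
      have := hM (show -r + j * δ + ρ ≤ -r + j * δ + δ by linarith)
      linarith
  obtain ⟨q, hq⟩ : ∃ q, q = ⌊(L - 2 * h) / δ⌋₊ := ⟨_, rfl⟩
  have hq0 : 0 ≤ (L - 2 * h) / δ := div_nonneg (by linarith) hδ0.le
  have hq1 : q * δ ≤ L - 2 * h := by
    rw [← le_div_iff₀ hδ0, hq]; exact Nat.floor_le hq0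
  have hq2 : L - 2 * h < (q + 1) * δ := by
    rw [← div_lt_iff₀ hδ0, hq]; exact Nat.lt_floor_add_one _
  obtain ⟨e, he⟩ : ∃ e, e = 1 / (n : ℝ) - 1 / (2 * k) + η / V := ⟨_, rfl⟩
  have hn1 : (k : ℝ) ≤ n := by rw [hnk]; linarith
  have hnpos : (0 : ℝ) < n := by exact_mod_cast hn0
  have hηV : η / V = 1 / (k : ℝ) ^ 3 := by rw [hη]; field_simp
  have he0 : 0 ≤ e := by
    have : 1 / (2 * (k : ℝ)) ≤ 1 / n := by gcongr; linarith
    have : 0 ≤ η / V := by positivity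
    rw [he]; linarith
  have hN3 := two_mul_le_of_cells (N := N) (x := y + h) (q := q) hp hwink (e := e) (fun j hj => by
    have h0 : 0 ≤ (j : ℝ) * δ := by positivity
    have h1 : ((j : ℝ) + 1) * δ ≤ q * δ := by
      have : ((j : ℝ) + 1) ≤ q := by exact_mod_cast hj
      gcongr
    have := hcell (y + h + j * δ) δ hδ0.le le_rfl (by linarith) (by linarith)
    have := div_le_div_of_nonneg_right this hV.le
    rw [add_div, div_div_cancel_left' hV.ne', ← one_div] at this
    rw [he]; linarith) he0
  have hqδ : 0 ≤ q * δ := by positivity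
  have hrem := hcell (y + h + q * δ) (L - 2 * h - q * δ) (by linarith) (by linarith) (by linarith)
    (by linarith)
  rw [show y + h + q * δ + (L - 2 * h - q * δ) = y - h + L by ring] at hrem
  have hN4 : N (y + h + q * δ) ≤ N (y - h + L) := hN (by linarith)
  have hN5 := hNP (y - h)
  have hrem' := div_le_div_of_nonneg_right hrem hV.le
  rw [add_div, div_div_cancel_left' hV.ne', ← one_div, hηV] at hrem'
  have htot : 2 * p * (1 - k * (η / V) - (1 / (n : ℝ) + 1 / (k : ℝ) ^ 3) - q * e) ≤ 2 * P := by
    have : (1 : ℝ) - k * (η / V) - (1 / (n : ℝ) + 1 / (k : ℝ) ^ 3) - q * e ≤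
        ((M y - M (y - h)) / V - k * η / (2 * V)) + ((M (y + h) - M y) / V - k * η / (2 * V)) +
        ((M (y + h + q * δ) - M (y + h)) / V - q * e) := by
      have h1 : (M y - M (y - h)) / V + (M (y + h) - M y) / V +
          (M (y + h + q * δ) - M (y + h)) / V + (M (y - h + L) - M (y + h + q * δ)) / V = 1 := by
        rw [hMy]; field_simp; ring
      have h2 : k * η / (2 * V) + k * η / (2 * V) = k * (η / V) := by ring
      linarith
    have := mul_le_mul_of_nonneg_left this (by positivity : 0 ≤ 2 * p)
    linarith
  have hkey := error_terms_le hh hL hk1 hnk hδ ((le_div_iff₀ hδ0).2 hq1) he hηV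
  have := mul_le_mul_of_nonneg_left hkey hp
  linarith

theorem exists_primitive_of_additive {f : ℝ → ℝ → ℝ}
    (hf : ∀ x y z, x ≤ y → y ≤ z → f x z = f x y + f y z) :
    ∃ M : ℝ → ℝ, ∀ x y, x ≤ y → M y - M x = f x y := by
  refine ⟨fun x => if 0 ≤ x then f 0 x else -f x 0, fun x y hxy => ?_⟩
  simp only
  split_ifs with h1 h2 h2
  · rw [hf 0 x y h2 hxy]; ring
  · rw [hf x 0 y (not_le.1 h2).le h1]; ring
  · exact absurd (h2.trans hxy) h1
  · rw [hf x y 0 hxy (not_le.1 h1).le]; ring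

theorem measure_inter_strip_ne_top {Y : Type*} [MetricSpace Y] [SecondCountableTopology Y]
    [MeasurableSpace Y] [BorelSpace Y] {T : ℝ} (hT : 0 < T) {S : Set (WithLp 2 (ℝ × Y))}
    (hS : ∀ p, slide T p ∈ S ↔ p ∈ S) {d : ℝ} (hd : 0 ≤ d)
    (hfin : μH[d] (S ∩ strip Y (Set.Ico 0 T)) ≠ ∞) (x y : ℝ) :
    μH[d] (S ∩ strip Y (Set.Icc x y)) ≠ ∞ := by
  have h1 : ∀ z, μH[d] (S ∩ strip Y (Set.Ico z (z + T))) ≠ ∞ := fun z => by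
    rwa [hausdorffMeasure_periodic_Ico hT hS hd, ← hausdorffMeasure_periodic_Ico hT hS hd 0,
      zero_add]
  have h2 : ∀ k : ℕ, μH[d] (S ∩ strip Y (Set.Ico x (x + k * T))) ≠ ∞ := by
    intro k
    induction k with
    | zero => simp [strip]
    | succ k ih =>
      have : 0 ≤ k * T := by positivity
      rw [measure_inter_strip_Ico _ _ (b := x + k * T) (by linarith) (by push_cast; linarith)]
      have h3 := h1 (x + k * T)
      rw [show x + k * T + T = x + ((k + 1 : ℕ) : ℝ) * T by push_cast; ring] at h3
      exact ENNReal.add_ne_top.2 ⟨ih, h3⟩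
  obtain ⟨k, hk⟩ := exists_nat_gt ((y - x) / T)
  refine ne_top_of_le_ne_top (h2 k) (measure_mono (Set.inter_subset_inter_right _ fun p hp => ?_))
  rw [div_lt_iff₀ hT] at hk
  exact ⟨hp.1, by linarith [hp.2]⟩

theorem two_mul_min_le {p V a b k : ℝ} (hV : 0 < V) (ha : 0 < a) (hk : 0 < k)
    (H : p ≤ max (V / (2 * k * a)) 1 * (k * b)) :
    2 * p * min (a / V) (1 / (2 * k)) ≤ b := by
  have hmin : 0 < min (a / V) (1 / (2 * k)) := lt_min (by positivity) (by positivity)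
  have key : 2 * min (a / V) (1 / (2 * k)) * max (V / (2 * k * a)) 1 * k = 1 := by
    rcases le_total (a / V) (1 / (2 * k)) with h | h
    · rw [min_eq_left h, max_eq_left]
      · field_simp
      · rw [div_le_div_iff₀ hV (by positivity)] at h
        rw [le_div_iff₀ (by positivity)]; linarith
    · rw [min_eq_right h, max_eq_right]
      · field_simp
      · rw [div_le_div_iff₀ (by positivity) hV] at h
        rw [div_le_iff₀ (by positivity)]; linarith
  calc 2 * p * min (a / V) (1 / (2 * k)) = (2 * min (a / V) (1 / (2 * k))) * p := by ring
    _ ≤ (2 * min (a / V) (1 / (2 * k))) * (max (V / (2 * k * a)) 1 * (k * b)) := by gcongr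
    _ = (2 * min (a / V) (1 / (2 * k)) * max (V / (2 * k * a)) 1 * k) * b := by ring
    _ = b := by rw [key, one_mul]

section Core

variable {Y : Type*} [NormedAddCommGroup Y] [InnerProductSpace ℝ Y] [FiniteDimensional ℝ Y]
  [MeasurableSpace Y] [BorelSpace Y] {m : ℕ}

/-- The distribution of the volume of `S` along the first coordinate has a continuous primitive. -/
theorem exists_continuous_primitive (hY : Module.finrank ℝ Y = m) (S : Set (WithLp 2 (ℝ × Y)))
    (hfin : ∀ x y, μH[((m + 1 : ℕ) : ℝ)] (S ∩ strip Y (Set.Icc x y)) ≠ ∞) :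
    ∃ M : ℝ → ℝ, Continuous M ∧ ∀ x y, x ≤ y →
      M y - M x = (μH[((m + 1 : ℕ) : ℝ)] (S ∩ strip Y (Set.Ico x y))).toReal := by
  set μ : Measure (WithLp 2 (ℝ × Y)) := μH[((m + 1 : ℕ) : ℝ)] with hμ
  have hfst : Measurable (WithLp.fst : WithLp 2 (ℝ × Y) → ℝ) :=
    (WithLp.continuous_fst 2 ℝ Y).measurable
  let α : Measure ℝ := Measure.map WithLp.fst (μ.restrict S)
  have hα : ∀ I, MeasurableSet I → α I = μ (S ∩ strip Y I) := fun I hI => by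
    rw [Measure.map_apply hfst hI, Measure.restrict_apply (hfst hI), Set.inter_comm]
    rfl
  have : NullSingletonClass α := ⟨fun x => by
    rw [hα _ (measurableSet_singleton x)]
    exact hausdorffMeasure_inter_strip_singleton hY S x⟩
  have : IsLocallyFiniteMeasure α := ⟨fun x => ⟨Set.Icc (x - 1) (x + 1),
    Icc_mem_nhds (by linarith) (by linarith), by
      rw [hα _ measurableSet_Icc]; exact (hfin _ _).lt_top⟩⟩
  have hint : ∀ a b, IntervalIntegrable (fun _ : ℝ => (1 : ℝ)) α a b := fun a b =>
    intervalIntegrable_const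
  refine ⟨fun x => ∫ _ in (0)..x, (1 : ℝ) ∂α, intervalIntegral.continuous_primitive hint 0,
    fun x y hxy => ?_⟩
  simp only
  rw [intervalIntegral.integral_interval_sub_left (hint _ _) (hint _ _),
    intervalIntegral.integral_of_le hxy, setIntegral_const, smul_eq_mul, mul_one, Measure.real,
    hα _ measurableSet_Ioc, hausdorffMeasure_inter_strip_Ioc_eq_Ioo hY,
    hausdorffMeasure_inter_strip_Ico_eq_Ioo hY]

/-- If every `2h`-periodic set of volume `V` has perimeter at least `J`, then so has every
`2H`-periodic set of volume `V`, for any `H ≥ h`. -/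
theorem le_frontier_of_le_period (hY : Module.finrank ℝ Y = m) (hm : m ≠ 0) {h H : ℝ} (hh : 0 < h)
    (hhH : h ≤ H) {J : ℝ≥0∞} {V : ℝ} (hV : 0 < V)
    (hJ : ∀ S : Set (WithLp 2 (ℝ × Y)), (∀ p, slide (2 * h) p ∈ S ↔ p ∈ S) →
      μH[((m + 1 : ℕ) : ℝ)] (S ∩ strip Y (Set.Ico 0 (2 * h))) = ENNReal.ofReal V →
      J ≤ μH[(m : ℝ)] (frontier S ∩ strip Y (Set.Ico 0 (2 * h))))
    {E : Set (WithLp 2 (ℝ × Y))} (hE : MeasurableSet E)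
    (hper : ∀ p, slide (2 * H) p ∈ E ↔ p ∈ E)
    (hEV : μH[((m + 1 : ℕ) : ℝ)] (E ∩ strip Y (Set.Ico 0 (2 * H))) = ENNReal.ofReal V) :
    J ≤ μH[(m : ℝ)] (frontier E ∩ strip Y (Set.Ico 0 (2 * H))) := by
  by_cases hP : μH[(m : ℝ)] (frontier E ∩ strip Y (Set.Ico 0 (2 * H))) = ∞
  · rw [hP]; exact le_top
  have hH : 0 < H := hh.trans_le hhH
  have hT : 0 < 2 * H := by positivity
  refine ENNReal.le_of_forall_nnreal_lt fun p hpJ => ?_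
  rw [← ENNReal.ofReal_coe_nnreal, ← ENNReal.ofReal_toReal hP]
  refine ENNReal.ofReal_le_ofReal ?_
  set P := (μH[(m : ℝ)] (frontier E ∩ strip Y (Set.Ico 0 (2 * H)))).toReal with hPdef
  have key : ∀ k : ℕ, 0 < k → (p : ℝ) * (1 - (3 + 2 * (2 * H / h)) / k) ≤ P := by
    intro k hk
    have hk0 : (0 : ℝ) < k := by exact_mod_cast hk
    obtain ⟨E', hper', hvol, hfr, hcmp⟩ := exists_nearly_symmetric hY hH hE hper
      (by rw [hEV]; exact ENNReal.ofReal_ne_top) (Finset.range k)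
      (fun i => ((i : ℝ) + 1 / 2) * (h / k)) (fun i hi => ⟨by positivity, by
        have : (i : ℝ) + 1 ≤ k := by exact_mod_cast Finset.mem_range.1 hi
        calc ((i : ℝ) + 1 / 2) * (h / k) ≤ k * (h / k) := by gcongr; linarith
          _ = h := by field_simp
          _ ≤ H := hhH⟩) (η := ENNReal.ofReal (V / k ^ 3))
      (by rw [Ne, ENNReal.ofReal_eq_zero, not_le]; positivity)
    set μ : Measure (WithLp 2 (ℝ × Y)) := μH[((m + 1 : ℕ) : ℝ)] with hμ
    set ν : Measure (WithLp 2 (ℝ × Y)) := μH[(m : ℝ)] with hν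
    have hperf := slide_mem_frontier hper'
    have hμfin : ∀ x y, μ (E' ∩ strip Y (Set.Icc x y)) ≠ ∞ :=
      measure_inter_strip_ne_top hT hper' (by positivity)
        (by rw [← hμ, hvol, hEV]; exact ENNReal.ofReal_ne_top)
    have hνfin : ∀ x y, ν (frontier E' ∩ strip Y (Set.Icc x y)) ≠ ∞ :=
      measure_inter_strip_ne_top hT hperf (by positivity) (ne_top_of_le_ne_top hP hfr)
    have hsub : ∀ {ξ : Measure (WithLp 2 (ℝ × Y))} {A : Set (WithLp 2 (ℝ × Y))} {I : Set ℝ} {x y : ℝ},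
        ξ (A ∩ strip Y (Set.Icc x y)) ≠ ∞ → I ⊆ Set.Icc x y → ξ (A ∩ strip Y I) ≠ ∞ :=
      fun h1 h2 => ne_top_of_le_ne_top h1 (measure_mono (Set.inter_subset_inter_right _
        fun q hq => h2 hq))
    obtain ⟨M, hMc, hM⟩ := exists_continuous_primitive hY E' hμfin
    obtain ⟨N, hN⟩ := exists_primitive_of_additive
      (f := fun x y => (ν (frontier E' ∩ strip Y (Set.Ioc x y))).toReal +
        (ν (frontier E' ∩ strip Y (Set.Ico x y))).toReal) fun x y z hxy hyz => by
      rw [measure_inter_strip_Ioc _ _ hxy hyz, measure_inter_strip_Ico _ _ hxy hyz,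
        ENNReal.toReal_add (hsub (hνfin x y) Set.Ioc_subset_Icc_self)
          (hsub (hνfin y z) Set.Ioc_subset_Icc_self),
        ENNReal.toReal_add (hsub (hνfin x y) Set.Ico_subset_Icc_self)
          (hsub (hνfin y z) Set.Ico_subset_Icc_self)]
      ring
    have hMm : Monotone M := fun x y hxy => by
      have := hM x y hxy
      have : 0 ≤ M y - M x := by rw [this]; exact ENNReal.toReal_nonneg
      linarith
    have hNm : Monotone N := fun x y hxy => by
      have := hN x y hxy
      have : 0 ≤ N y - N x := by
        rw [this]; exact add_nonneg ENNReal.toReal_nonneg ENNReal.toReal_nonneg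
      linarith
    have hwin : ∀ j : ℕ, 0 < j → ∀ x, 2 * (p : ℝ) * min ((M (x + h / j) - M x) / V) (1 / (2 * j)) ≤
        N (x + h / j) - N x := by
      intro j hj x
      have hj0 : (0 : ℝ) < j := by exact_mod_cast hj
      have hx : x ≤ x + h / j := le_add_of_nonneg_right (by positivity)
      rcases (sub_nonneg.2 (hMm hx)).eq_or_lt with h0 | h0
      · rw [← h0, zero_div, min_eq_left (by positivity), mul_zero]
        exact sub_nonneg.2 (hNm hx)
      · refine two_mul_min_le hV h0 hj0 ?_
        have h1 := le_frontier_window hY hm hh hV hJ E' hj x h0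
          (by rw [hM _ _ hx]; exact (ENNReal.ofReal_toReal
            (hsub (hμfin _ _) Set.Ico_subset_Icc_self)).symm)
        have h2 := hpJ.le.trans h1
        rw [hN _ _ hx]
        have h3 := hsub (hνfin x (x + h / j)) Set.Ioc_subset_Icc_self
        have h4 := hsub (hνfin x (x + h / j)) Set.Ico_subset_Icc_self
        have h5 := ENNReal.toReal_mono (ENNReal.mul_ne_top ENNReal.ofReal_ne_top
          (ENNReal.mul_ne_top (ENNReal.natCast_ne_top j) (ENNReal.add_ne_top.2 ⟨h3, h4⟩))) h2
        rwa [ENNReal.toReal_mul, ENNReal.toReal_mul, ENNReal.toReal_add h3 h4,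
          ENNReal.toReal_ofReal (le_max_of_le_right zero_le_one), ENNReal.toReal_natCast,
          ENNReal.coe_toReal] at h5
    have hwin1 := hwin 1 one_pos
    simp only [Nat.cast_one, div_one, mul_one] at hwin1
    refine le_of_windows (L := 2 * H) hMc hMm hNm hh (by linarith) hV p.2 (fun x => ?_) (fun x => ?_)
      hk hwin1 (hwin k hk) (fun i hi a b ρ hρ h1 h2 h3 h4 => ?_)
    · have h1 := hM x (x + 2 * H) (by linarith)
      rw [hausdorffMeasure_periodic_Ico hT hper' (by positivity),
        ← hausdorffMeasure_periodic_Ico hT hper' (by positivity) 0, zero_add, ← hμ, hvol, hEV,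
        ENNReal.toReal_ofReal hV.le] at h1
      linarith
    · have h1 := hN x (x + 2 * H) (by linarith)
      rw [hν, hausdorffMeasure_periodic_Ico hT hperf (by positivity),
        hausdorffMeasure_periodic_Ioc hT hperf (by positivity),
        ← hausdorffMeasure_periodic_Ico hT hperf (by positivity) 0, zero_add, ← hν] at h1
      have := ENNReal.toReal_mono hP hfr
      linarith
    · have h5 := hcmp i (Finset.mem_range.2 hi) a b ρ hρ h1 h2 h3 h4
      rw [← hausdorffMeasure_inter_strip_Ico_eq_Ioo hY,
        ← hausdorffMeasure_inter_strip_Ico_eq_Ioo hY] at h5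
      have h6 : μ (E' ∩ strip Y (Set.Ico b (b + ρ))) ≠ ∞ :=
        hsub (hμfin b (b + ρ)) Set.Ico_subset_Icc_self
      have h7 := ENNReal.toReal_mono (ENNReal.add_ne_top.2 ⟨h6, ENNReal.ofReal_ne_top⟩) h5
      rw [ENNReal.toReal_add h6 ENNReal.ofReal_ne_top, ENNReal.toReal_ofReal (by positivity)] at h7
      rw [hM _ _ (by linarith), hM _ _ (by linarith)]
      exact h7
  have hlim : Filter.Tendsto (fun k : ℕ => (p : ℝ) * (1 - (3 + 2 * (2 * H / h)) / k)) Filter.atTop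
      (nhds ((p : ℝ) * (1 - 0))) :=
    (tendsto_const_nhds.sub (tendsto_const_div_atTop_nhds_zero_nat _)).const_mul _
  rw [sub_zero, mul_one] at hlim
  refine le_of_tendsto hlim ?_
  filter_upwards [Filter.eventually_gt_atTop 0] with k hk using key k hk

end Core

theorem isoProfile_le_of_le_radius {r r' : ℝ} (hr : 0 < r) (hrr' : r ≤ r') {m : ℕ} (hm : m ≠ 0)
    {Y : Type*} [NormedAddCommGroup Y] [InnerProductSpace ℝ Y] [FiniteDimensional ℝ Y]
    [MeasurableSpace Y] [BorelSpace Y] (hY : Module.finrank ℝ Y = m)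
    {S : Set (WithLp 2 (ℝ × Y))} (hSm : MeasurableSet S)
    (hS : ∀ p, slide (2 * π * r') p ∈ S ↔ p ∈ S) :
    isoProfile (S1R r m) (m + 1)
        (μH[((m + 1 : ℕ) : ℝ)] (S ∩ strip Y (Set.Ico 0 (2 * π * r')))) ≤
      μH[(m : ℝ)] (frontier S ∩ strip Y (Set.Ico 0 (2 * π * r'))) := by
  have hL : 0 < 2 * π * r := by positivity
  rcases eq_or_ne (μH[((m + 1 : ℕ) : ℝ)] (S ∩ strip Y (Set.Ico 0 (2 * π * r')))) 0 with h0 | h0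
  · have h := isoProfile_le_of_periodic hr hY (S := ∅) (by simp)
    rw [Set.empty_inter, measure_empty, frontier_empty, Set.empty_inter, measure_empty] at h
    rw [h0]
    exact h.trans zero_le
  rcases eq_or_ne (μH[((m + 1 : ℕ) : ℝ)] (S ∩ strip Y (Set.Ico 0 (2 * π * r')))) ∞ with h1 | h1
  · have htop : μH[((m + 1 : ℕ) : ℝ)] (Set.univ ∩ strip Y (Set.Ico 0 (2 * π * r))) = ∞ := by
      by_contra hfin
      refine measure_inter_strip_ne_top hL (by simp) (by positivity) hfin 0 (2 * π * r')
        (top_unique (h1.ge.trans (measure_mono ?_)))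
      exact Set.inter_subset_inter (Set.subset_univ _) fun q hq => Set.Ico_subset_Icc_self hq
    have h := isoProfile_le_of_periodic hr hY (S := Set.univ) (by simp)
    rw [htop, frontier_univ, Set.empty_inter, measure_empty] at h
    rw [h1]
    exact h.trans zero_le
  have hV := ENNReal.ofReal_toReal h1
  rw [mul_assoc] at hS
  have key := le_frontier_of_le_period hY hm (h := π * r) (H := π * r') (by positivity)
    (by gcongr) (ENNReal.toReal_pos h0 h1)
    (J := isoProfile (S1R r m) (m + 1)
      (μH[((m + 1 : ℕ) : ℝ)] (S ∩ strip Y (Set.Ico 0 (2 * π * r')))))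
    (fun S' hS' hV' => by
      rw [← mul_assoc] at hS' hV' ⊢
      have h := isoProfile_le_of_periodic hr hY hS'
      rwa [hV', hV] at h)
    hSm hS (by rw [hV, mul_assoc])
  rwa [← mul_assoc] at key

theorem hausdorffMeasure_eq_zero_of_ne_top {X : Type*} [EMetricSpace X] [MeasurableSpace X]
    [BorelSpace X] {d d' : ℝ} (hd : d < d') {A : Set X} (hA : μH[d] A ≠ ∞) : μH[d'] A = 0 :=
  (Measure.hausdorffMeasure_zero_or_top hd A).resolve_right hA

section Cut

variable {X : Type*} [MetricSpace X] [SecondCountableTopology X] [MeasurableSpace X] [BorelSpace X]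
  {L : ℝ}

/-- The lift of `A` to `ℝ × X`, restricted to one period starting at `s`. -/
def unroll (L s : ℝ) (A : Set (WithLp 2 (AddCircle L × X))) : Set (WithLp 2 (ℝ × X)) :=
  wrap L X ⁻¹' A ∩ strip X (Set.Ioo s (s + L))

theorem measurableSet_unroll {A : Set (WithLp 2 (AddCircle L × X))} (hA : IsClosed A) (s : ℝ) :
    MeasurableSet (unroll L s A) :=
  (hA.preimage (continuous_wrap L X)).measurableSet.inter (measurableSet_strip measurableSet_Ioo)

theorem hausdorffMeasure_unroll (hL : 0 < L) {A : Set (WithLp 2 (AddCircle L × X))} {s d d' : ℝ}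
    (hd : 0 ≤ d) (hdd' : d < d') (hs : μH[d] (A ∩ {z | z.fst = (s : AddCircle L)}) ≠ ∞) :
    μH[d'] (unroll L s A) = μH[d'] A := by
  have hnull : μH[d'] (wrap L X ⁻¹' A ∩ strip X {s}) = 0 := by
    refine measure_mono_null (t := wrap L X ⁻¹' (A ∩ {z | z.fst = (s : AddCircle L)}) ∩
      strip X (Set.Ico s (s + L))) ?_ ?_
    · rintro p ⟨hp, h⟩
      have h' : p.fst = s := h
      refine ⟨⟨hp, ?_⟩, ?_, ?_⟩
      · simp only [wrap, Set.mem_ofPred_eq, WithLp.toLp_fst, h']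
      · exact h'.ge
      · rw [h']; linarith
    · rw [hausdorffMeasure_wrap_Ico hL (hd.trans hdd'.le)]
      exact hausdorffMeasure_eq_zero_of_ne_top hdd' hs
  rw [← hausdorffMeasure_wrap_Ico hL (hd.trans hdd'.le) s A,
    ← Set.Ioo_union_left (show s < s + L by linarith),
    measure_inter_strip_union _ _ measurableSet_Ioo (by simp), hnull, add_zero, unroll]

theorem hausdorffMeasure_frontier_unroll_le (hL : 0 < L) {A : Set (WithLp 2 (AddCircle L × X))}
    (hA : IsClosed A) (s : ℝ) {d : ℝ} (hd : 0 ≤ d) :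
    μH[d] (frontier (unroll L s A)) ≤
      μH[d] (frontier A) + 2 * μH[d] (A ∩ {z | z.fst = (s : AddCircle L)}) := by
  have hfst : Continuous fun p : WithLp 2 (ℝ × X) => p.fst := WithLp.continuous_fst 2 ℝ X
  have hsub : frontier (unroll L s A) ⊆ (wrap L X ⁻¹' frontier A ∩ strip X (Set.Ico s (s + L))) ∪
      ((wrap L X ⁻¹' (A ∩ {z | z.fst = (s : AddCircle L)}) ∩ strip X (Set.Ico s (s + L))) ∪
      (wrap L X ⁻¹' (A ∩ {z | z.fst = (s : AddCircle L)}) ∩ strip X (Set.Ioc s (s + L)))) := by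
    rintro p ⟨hp, hpi⟩
    have hcl : IsClosed (wrap L X ⁻¹' A ∩ strip X (Set.Icc s (s + L))) :=
      (hA.preimage (continuous_wrap L X)).inter (isClosed_Icc.preimage hfst)
    have hle : unroll L s A ⊆ wrap L X ⁻¹' A ∩ strip X (Set.Icc s (s + L)) :=
      fun q hq => ⟨hq.1, Set.Ioo_subset_Icc_self hq.2⟩
    obtain ⟨hpA, h1, h2⟩ := closure_minimal hle hcl hp
    rcases h1.eq_or_lt with h1' | h1'
    · refine Or.inr (Or.inl ⟨⟨hpA, ?_⟩, h1, ?_⟩)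
      · simp only [wrap, Set.mem_ofPred_eq, WithLp.toLp_fst, ← h1']
      · rw [← h1']; linarith
    rcases h2.eq_or_lt with h2' | h2'
    · refine Or.inr (Or.inr ⟨⟨hpA, ?_⟩, h1', h2⟩)
      simp only [wrap, Set.mem_ofPred_eq, WithLp.toLp_fst, h2', AddCircle.coe_add_period]
    · refine Or.inl ⟨?_, h1, h2'⟩
      rw [preimage_wrap_frontier]
      refine ⟨subset_closure hpA, fun hpi' => hpi ?_⟩
      rw [unroll, interior_inter]
      refine ⟨hpi', ?_⟩
      have ho : IsOpen (strip X (Set.Ioo s (s + L))) := isOpen_Ioo.preimage hfst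
      rw [ho.interior_eq]
      exact ⟨h1', h2'⟩
  refine (measure_mono hsub).trans ((measure_union_le _ _).trans ?_)
  rw [hausdorffMeasure_wrap_Ico hL hd, two_mul]
  gcongr
  refine (measure_union_le _ _).trans ?_
  rw [hausdorffMeasure_wrap_Ico hL hd, hausdorffMeasure_wrap_Ioc hL hd]

end Cut

/-- Exchange of the first two factors of a triple product. -/
def prodLeftComm (A B C : Type*) [MetricSpace A] [MetricSpace B] [MetricSpace C] :
    WithLp 2 (A × WithLp 2 (B × C)) ≃ᵢ WithLp 2 (B × WithLp 2 (A × C)) :=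
  ((IsometryEquiv.withLpProdAssoc 2 A B C).symm.trans
    (IsometryEquiv.withLpProdCongr 2 (IsometryEquiv.withLpProdComm 2 A B)
      (IsometryEquiv.refl C))).trans (IsometryEquiv.withLpProdAssoc 2 B A C)

/-- Cutting a closed set open along a slice of the first circle gives a set which is periodic in
the direction of the second circle. -/
theorem exists_periodic_of_slice {L T : ℝ} (hL : 0 < L) (hT : 0 < T) {W : Type*} [MetricSpace W]
    [SecondCountableTopology W] [MeasurableSpace W] [BorelSpace W]
    {A : Set (WithLp 2 (AddCircle L × WithLp 2 (AddCircle T × W)))} (hA : IsClosed A)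
    (s : AddCircle L) {d d' : ℝ} (hd : 0 ≤ d) (hdd' : d < d')
    (hs : μH[d] (A ∩ {z | z.fst = s}) ≠ ∞) :
    ∃ S : Set (WithLp 2 (ℝ × WithLp 2 (ℝ × W))), MeasurableSet S ∧
      (∀ p, slide T p ∈ S ↔ p ∈ S) ∧
      μH[d'] (S ∩ strip _ (Set.Ico 0 T)) = μH[d'] A ∧
      μH[d] (frontier S ∩ strip _ (Set.Ico 0 T)) ≤
        μH[d] (frontier A) + 2 * μH[d] (A ∩ {z | z.fst = s}) := by
  obtain ⟨s, rfl⟩ := QuotientAddGroup.mk_surjective s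
  let e := prodLeftComm (AddCircle T) ℝ W
  have hS := hausdorffMeasure_wrap_Ico hT (hd.trans hdd'.le) 0 (e ⁻¹' unroll L s A)
  have hS' := hausdorffMeasure_wrap_Ico hT hd 0 (frontier (e ⁻¹' unroll L s A))
  have hf : frontier (e ⁻¹' unroll L s A) = e ⁻¹' frontier (unroll L s A) :=
    (e.toHomeomorph.preimage_frontier _).symm
  rw [zero_add, e.hausdorffMeasure_preimage, hausdorffMeasure_unroll hL hd hdd' hs] at hS
  rw [zero_add, preimage_wrap_frontier, hf, e.hausdorffMeasure_preimage] at hS'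
  refine ⟨wrap T _ ⁻¹' (e ⁻¹' unroll L s A), ?_, fun p => ?_, hS, ?_⟩
  · exact (measurableSet_unroll hA s).preimage (e.continuous.comp (continuous_wrap T _)).measurable
  · have : wrap T _ (slide T p) = wrap T _ p := by
      simp only [wrap, slide, WithLp.toLp_fst, WithLp.toLp_snd, AddCircle.coe_add_period]
    simp only [Set.mem_preimage, this]
  · exact hS'.le.trans (hausdorffMeasure_frontier_unroll_le hL hA s hd)

theorem le_of_iInf_eq_zero {ι : Type*} {a b : ℝ≥0∞} {f : ι → ℝ≥0∞} (hf : ⨅ i, f i = 0)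
    (h : ∀ i, f i ≠ ∞ → a ≤ b + 2 * f i) : a ≤ b := by
  refine ENNReal.le_of_forall_pos_le_add fun ε hε _ => ?_
  have hε' : (⨅ i, f i) < ((ε / 2 : ℝ≥0) : ℝ≥0∞) := by
    rw [hf]; exact_mod_cast half_pos hε
  obtain ⟨i, hi⟩ := iInf_lt_iff.1 hε'
  refine (h i hi.ne_top).trans ?_
  gcongr
  refine (mul_le_mul_right hi.le 2).trans ?_
  rw [← ENNReal.coe_ofNat, ← ENNReal.coe_mul, mul_div_cancel₀ _ (two_ne_zero)]

/-- Lemma 1 of the paper.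
Let `0 < r1 ≤ r2`, `2 ≤ n ≤ 5`, and let `Ω` be an isoperimetric region in
`S¹_{r1} × S¹_{r2} × ℝⁿ`.  If `θ_m = 0` or `σ_m = 0`, then
`I_{S¹_{r1}×ℝ^{n+1}}(V^{n+2}(Ω)) ≤ V^{n+1}(∂Ω)`. -/
theorem slice_min_zero (r1 r2 : ℝ) (hr1 : 0 < r1) (hr12 : r1 ≤ r2)
    (n : ℕ) (hn2 : 2 ≤ n) (hn5 : n ≤ 5)
    (Ω : Set (T2R r1 r2 n)) (hΩ : IsIsoRegion (T2R r1 r2 n) (n+2) Ω)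
    (h : thetaMin Ω = 0 ∨ sigmaMin Ω = 0) :
    isoProfile (S1R r1 (n+1)) (n+2) (haus (T2R r1 r2 n) (n+2) Ω)
      ≤ haus (T2R r1 r2 n) (n+1) (frontier Ω) := by
  have hcl : IsClosed Ω := by
    obtain ⟨⟨U, -, rfl⟩, -⟩ := hΩ
    exact isClosed_closure
  have hr2 : 0 < r2 := hr1.trans_le hr12
  have hL1 : 0 < 2 * π * r1 := by positivity
  have hL2 : 0 < 2 * π * r2 := by positivity
  have hY : Module.finrank ℝ (WithLp 2 (ℝ × EucSp n)) = n + 1 :=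
    finrank_withLp_prod finrank_euclideanSpace_fin
  have hd : (0 : ℝ) ≤ ((n + 1 : ℕ) : ℝ) := Nat.cast_nonneg _
  have hdd' : ((n + 1 : ℕ) : ℝ) < ((n + 1 + 1 : ℕ) : ℝ) := by exact_mod_cast Nat.lt_succ_self _
  rw [haus_eq_hausdorffMeasure, haus_eq_hausdorffMeasure]
  rcases h with h | h
  · refine le_of_iInf_eq_zero h fun t ht => ?_
    rw [sliceF1, haus_eq_hausdorffMeasure] at ht ⊢
    obtain ⟨S, hSm, hS, hvol, hfr⟩ := exists_periodic_of_slice hL1 hL2 hcl t hd hdd' ht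
    have key := isoProfile_le_of_le_radius hr1 hr12 n.succ_ne_zero hY hSm hS
    rw [hvol] at key
    exact key.trans hfr
  · refine le_of_iInf_eq_zero h fun t ht => ?_
    rw [sliceF2, haus_eq_hausdorffMeasure] at ht ⊢
    let e := prodLeftComm (Circ r2) (Circ r1) (EucSp n)
    have hf : frontier (e ⁻¹' Ω) = e ⁻¹' frontier Ω := (e.toHomeomorph.preimage_frontier _).symm
    have hsl : e ⁻¹' Ω ∩ {z | z.fst = t} = e ⁻¹' (Ω ∩ {p | t2snd p = t}) := rfl
    have ht' : μH[((n + 1 : ℕ) : ℝ)] (e ⁻¹' Ω ∩ {z | z.fst = t}) ≠ ∞ := by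
      rwa [hsl, e.hausdorffMeasure_preimage]
    obtain ⟨S, -, hS, hvol, hfr⟩ :=
      exists_periodic_of_slice hL2 hL1 (hcl.preimage e.continuous) t hd hdd' ht'
    rw [hf, hsl, e.hausdorffMeasure_preimage, e.hausdorffMeasure_preimage] at hfr
    rw [e.hausdorffMeasure_preimage] at hvol
    have key := isoProfile_le_of_periodic hr1 hY hS
    rw [hvol] at key
    exact key.trans hfr

end
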